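/- arXiv:1906.04019 — 4 statements merged into one kernel-verified Lean document; each statement's English description precedes it below -/
import Mathlib

section
/- For all x, y ∈ ℝ^d and μ ∈ {1,…,d}, the y-derivative of the path-ordered exponential satisfies ∂_{y^μ} Φ(x,y) − Φ(x,y) B_μ(y) = −∫_0^1 s (y−x)^ν Φ(x, w(s)) F_{νμ}(w(s)) Φ(w(s), y) ds, where w(s) = x + s(y−x). -/
/-! Fix `x` and `h`, and write `U(s)` for the transport from `y` to `z(s) = y + s(x - y)`, so that
`U' = A U` with `A(s) = -B(z(s))(x - y)`, where `B(z)(v) = v^ν B_ν(z)`. Duhamel's formula compares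
`U` with the transport starting at a nearby point `y'`; with Grönwall's inequality it shows that
`Φ(x, ·)` is differentiable at `y`, with derivative `Φ(x,y) ∫ U⁻¹ (∂_h A) U ds`
(`fderiv_linear_ode`). A direct computation gives
`d/ds [(1 - s) U⁻¹ B(z)(h) U] = (1 - s) U⁻¹ F(x - y, h) U - U⁻¹ (∂_h A) U`,
so the integral equals `B(y)(h) + ∫ (1 - s) U⁻¹ F(x - y, h) U ds`. Uniqueness for linear equations
yields `Φ(x,y) U(s)⁻¹ = Φ(x, z(s))` and `U(s) = Φ(z(s), y)` (`mul_comp`, `mul_symm`,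
`eq_endpoint`), and `s ↦ 1 - s` turns `z(s)` into `w(s)`.

The argument takes place in a Banach algebra, and matrices are carried to operators on `ℂ^m` by
`matrixToOperator`. -/

/- STATEMENT 3: derivative of the path-ordered exponential in its second
argument: `∂_{y^μ} Φ(x,y) − Φ(x,y) B_μ(y)
  = −∫_0^1 s (y−x)^ν Φ(x,w(s)) F_{νμ}(w(s)) Φ(w(s),y) ds`, `w(s) = x + s(y−x)`. -/

attribute [local instance] Matrix.normedAddCommGroup Matrix.normedSpace

/-- Partial derivative in the `μ`-th coordinate direction. -/
noncomputable def pd {d m : ℕ} (μ : Fin d)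
    (g : EuclideanSpace ℝ (Fin d) → Matrix (Fin m) (Fin m) ℂ) :
    EuclideanSpace ℝ (Fin d) → Matrix (Fin m) (Fin m) ℂ :=
  fun x => fderiv ℝ g x (EuclideanSpace.single μ 1)

/-- The field strength `F_{μν} = ∂_μ B_ν − ∂_ν B_μ + [B_μ, B_ν]`. -/
noncomputable def Fstr {d m : ℕ}
    (B : Fin d → EuclideanSpace ℝ (Fin d) → Matrix (Fin m) (Fin m) ℂ)
    (μ ν : Fin d) : EuclideanSpace ℝ (Fin d) → Matrix (Fin m) (Fin m) ℂ :=
  fun x => pd μ (B ν) x - pd ν (B μ) x + (B μ x * B ν x - B ν x * B μ x)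

/-! ### Linear differential equations in a Banach algebra -/

section Abstract

open Set Filter Topology MeasureTheory

variable {E : Type*} [NormedAddCommGroup E] [NormedSpace ℝ E]
variable {𝔸 : Type*} [NormedRing 𝔸] [NormedAlgebra ℝ 𝔸]

/-- Grönwall's inequality for `u' = a u + f` on `[0, 1]`. Assuming `1 ≤ K` absorbs the factor
`1 / K` of the sharp bound and avoids a case distinction at `K = 0`. -/
lemma norm_le_of_linear_ode {a f u : ℝ → 𝔸} {K ε δ : ℝ} (hK : 1 ≤ K) (hδ : 0 ≤ δ) (hε : 0 ≤ ε)
    (hu : ∀ s ∈ Icc (0:ℝ) 1, HasDerivWithinAt u (a s * u s + f s) (Icc (0:ℝ) 1) s)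
    (hu0 : ‖u 0‖ ≤ δ) (ha : ∀ s ∈ Icc (0:ℝ) 1, ‖a s‖ ≤ K) (hf : ∀ s ∈ Icc (0:ℝ) 1, ‖f s‖ ≤ ε) :
    ∀ s ∈ Icc (0:ℝ) 1, ‖u s‖ ≤ (δ + ε) * Real.exp K := by
  intro s hs
  have h := norm_le_gronwallBound_of_norm_deriv_right_le (f := u) (f' := fun s => a s * u s + f s)
    (δ := δ) (K := K) (ε := ε) (a := 0) (b := 1) (fun s hs => (hu s hs).continuousWithinAt)
    (fun s hs => (hu s (Ico_subset_Icc_self hs)).mono_of_mem_nhdsWithin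
      (Icc_mem_nhdsGE_of_mem hs)) hu0
    (fun s hs => by
      have hs' := Ico_subset_Icc_self hs
      refine (norm_add_le _ _).trans (add_le_add ((norm_mul_le _ _).trans ?_) (hf s hs'))
      gcongr
      exact ha s hs') s hs
  have hK0 : K ≠ 0 := by positivity
  rw [gronwallBound_of_K_ne_0 hK0, sub_zero] at h
  refine h.trans ?_
  have h1 : Real.exp (K * s) ≤ Real.exp K := by
    apply Real.exp_le_exp.2
    nlinarith [hs.2]
  have h2 : 0 ≤ Real.exp (K * s) - 1 := by
    have := Real.one_le_exp (show 0 ≤ K * s from mul_nonneg (by linarith) hs.1)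
    linarith
  have h3 : ε / K ≤ ε := div_le_self hε hK
  have h4 : ε / K * (Real.exp (K * s) - 1) ≤ ε * Real.exp K :=
    mul_le_mul h3 (by linarith) h2 hε
  nlinarith [mul_le_mul_of_nonneg_left h1 hδ]

lemma linear_ode_unique {a u v : ℝ → 𝔸} (ha : ContinuousOn a (Icc (0:ℝ) 1))
    (hu : ∀ s ∈ Icc (0:ℝ) 1, HasDerivWithinAt u (a s * u s) (Icc (0:ℝ) 1) s)
    (hv : ∀ s ∈ Icc (0:ℝ) 1, HasDerivWithinAt v (a s * v s) (Icc (0:ℝ) 1) s)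
    (h0 : u 0 = v 0) : ∀ s ∈ Icc (0:ℝ) 1, u s = v s := by
  obtain ⟨K, hK⟩ := isCompact_Icc.exists_bound_of_continuousOn ha
  intro s hs
  have h := norm_le_of_linear_ode (a := a) (f := 0) (u := u - v) (K := max K 1) (ε := 0) (δ := 0)
    (le_max_right _ _) le_rfl le_rfl
    (fun s hs => by
      have := (hu s hs).sub (hv s hs)
      simpa [mul_sub] using this) (by simp [h0])
    (fun s hs => (hK s hs).trans (le_max_left _ _)) (by simp) s hs
  simpa [sub_eq_zero] using h

/-- The inverse `v` of a solution of `u' = a u` solves the adjoint equation `v' = -v a`. -/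
lemma hasDerivWithinAt_of_two_sided_inverse [CompleteSpace 𝔸] {a u v : ℝ → 𝔸}
    (hu : ∀ s ∈ Icc (0:ℝ) 1, HasDerivWithinAt u (a s * u s) (Icc (0:ℝ) 1) s)
    (huv : ∀ s ∈ Icc (0:ℝ) 1, u s * v s = 1) (hvu : ∀ s ∈ Icc (0:ℝ) 1, v s * u s = 1) :
    ∀ s ∈ Icc (0:ℝ) 1, HasDerivWithinAt v (-(v s * a s)) (Icc (0:ℝ) 1) s := by
  intro s hs
  have hinv : ∀ t ∈ Icc (0:ℝ) 1, v t = Ring.inverse (u t) := fun t ht =>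
    (Ring.inverse_unit (⟨u t, v t, huv t ht, hvu t ht⟩ : 𝔸ˣ)).symm
  have h := (hasFDerivAt_ringInverse (𝕜 := ℝ) (⟨u s, v s, huv s hs, hvu s hs⟩ : 𝔸ˣ))
  have h2 := h.comp_hasDerivWithinAt s (hu s hs)
  refine (h2.congr (fun t ht => hinv t ht) (hinv s hs)).congr_deriv ?_
  simp [mul_assoc, huv s hs]

/-- Differentiation of `u z 1` in the parameter `z`, where `u z` solves `(u z)' = a z * u z` with
`u z 0 = 1`. Duhamel's formula represents `u z 1` as
`u y 1 * (1 + ∫ s, v s * (a z s - a y s) * u z s)`, whose integrand vanishes at `z = y` to first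
order, uniformly in `s`; so only a Lipschitz bound for `u z` at `y`, given by Grönwall's
inequality, is needed to differentiate under the integral sign. -/
lemma fderiv_linear_ode [CompleteSpace 𝔸] {a u : E → ℝ → 𝔸} {v : ℝ → 𝔸}
    {a' : ℝ → E →L[ℝ] 𝔸} {y : E} {K C : ℝ} {S : Set E} (hS : S ∈ 𝓝 y)
    (hu0 : ∀ z, u z 0 = 1)
    (hu : ∀ z, ∀ s ∈ Icc (0:ℝ) 1, HasDerivWithinAt (u z) (a z s * u z s) (Icc (0:ℝ) 1) s)
    (huv : ∀ s ∈ Icc (0:ℝ) 1, u y s * v s = 1) (hvu : ∀ s ∈ Icc (0:ℝ) 1, v s * u y s = 1)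
    (ha : ∀ z, ContinuousOn (a z) (Icc (0:ℝ) 1)) (ha' : ContinuousOn a' (Icc (0:ℝ) 1))
    (hK : ∀ z ∈ S, ∀ s ∈ Icc (0:ℝ) 1, ‖a z s‖ ≤ K)
    (hC : ∀ z ∈ S, ∀ s ∈ Icc (0:ℝ) 1, ‖a z s - a y s‖ ≤ C * ‖z - y‖)
    (hd : ∀ s ∈ Icc (0:ℝ) 1, HasFDerivAt (fun z => a z s) (a' s) y) (h : E) :
    fderiv ℝ (fun z => u z 1) y h = u y 1 * ∫ s in (0:ℝ)..1, v s * a' s h * u y s := by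
  have hv := hasDerivWithinAt_of_two_sided_inverse (hu y) huv hvu
  have hvc : ContinuousOn v (Icc (0:ℝ) 1) := fun s hs => (hv s hs).continuousWithinAt
  have huc : ∀ z, ContinuousOn (u z) (Icc (0:ℝ) 1) := fun z s hs => (hu z s hs).continuousWithinAt
  obtain ⟨M, hM⟩ := isCompact_Icc.exists_bound_of_continuousOn hvc
  have hM0 : 0 ≤ M := (norm_nonneg _).trans (hM 0 (by simp))
  obtain ⟨N, hN⟩ := isCompact_Icc.exists_bound_of_continuousOn (huc y)
  have hN0 : 0 ≤ N := (norm_nonneg _).trans (hN 0 (by simp))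
  -- replace `C` by a nonnegative constant
  obtain ⟨C, hC0, hC⟩ : ∃ C : ℝ, 0 ≤ C ∧
      ∀ z ∈ S, ∀ s ∈ Icc (0:ℝ) 1, ‖a z s - a y s‖ ≤ C * ‖z - y‖ :=
    ⟨|C|, abs_nonneg _, fun z hz s hs => (hC z hz s hs).trans (by gcongr; exact le_abs_self C)⟩
  set L : ℝ := C * N * Real.exp (max K 1) with hL
  have hL0 : 0 ≤ L := by positivity
  have hlip : ∀ z ∈ S, ∀ s ∈ Icc (0:ℝ) 1, ‖u z s - u y s‖ ≤ L * ‖z - y‖ := by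
    intro z hz s hs
    have := norm_le_of_linear_ode (a := a z) (f := fun s => (a z s - a y s) * u y s)
      (u := u z - u y) (K := max K 1) (ε := C * ‖z - y‖ * N) (δ := 0)
      (le_max_right _ _) le_rfl (by positivity)
      (fun s hs => by
        refine ((hu z s hs).sub (hu y s hs)).congr_deriv ?_
        simp only [Pi.sub_apply]
        noncomm_ring) (by simp [hu0])
      (fun s hs => (hK z hz s hs).trans (le_max_left _ _))
      (fun s hs => (norm_mul_le _ _).trans
        (mul_le_mul (hC z hz s hs) (hN s hs) (norm_nonneg _) (by positivity))) s hs
    refine this.trans (le_of_eq ?_)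
    rw [hL]; ring
  -- Duhamel's formula
  set F : E → ℝ → 𝔸 := fun z s => v s * (a z s - a y s) * u z s with hF
  have hFc : ∀ z, ContinuousOn (F z) (Icc (0:ℝ) 1) := fun z =>
    (hvc.mul ((ha z).sub (ha y))).mul (huc z)
  have hduh : ∀ z, u z 1 = u y 1 * (1 + ∫ s in (0:ℝ)..1, F z s) := by
    intro z
    have hder : ∀ s ∈ Icc (0:ℝ) 1,
        HasDerivWithinAt (fun s => v s * u z s) (F z s) (Icc (0:ℝ) 1) s := by
      intro s hs
      refine ((hv s hs).mul (hu z s hs)).congr_deriv ?_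
      simp only [hF]
      noncomm_ring
    have := intervalIntegral.integral_eq_sub_of_hasDerivAt_of_le zero_le_one
      (fun s hs => (hder s hs).continuousWithinAt)
      (fun s hs => (hder s (Ioo_subset_Icc_self hs)).hasDerivAt (Icc_mem_nhds hs.1 hs.2))
      (ContinuousOn.intervalIntegrable_of_Icc zero_le_one (hFc z))
    have hv0 : v 0 = 1 := by have := huv 0 (by simp); rwa [hu0, one_mul] at this
    rw [this, hu0, hv0, mul_one, add_sub_cancel, ← mul_assoc, huv 1 (by simp), one_mul]
  set F' : ℝ → E →L[ℝ] 𝔸 := fun s =>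
    ((ContinuousLinearMap.mulLeftRight ℝ 𝔸) (v s) (u y s)).comp (a' s) with hF'
  have hF'c : ContinuousOn F' (Icc (0:ℝ) 1) := by
    refine ContinuousOn.clm_comp ?_ ha'
    have h1 : ContinuousOn (fun s => ContinuousLinearMap.mulLeftRight ℝ 𝔸 (v s))
      (Icc (0:ℝ) 1) := (ContinuousLinearMap.mulLeftRight ℝ 𝔸).continuous.comp_continuousOn hvc
    exact h1.clm_apply (huc y)
  have hFd : ∀ s ∈ Icc (0:ℝ) 1, HasFDerivAt (fun z => F z s) (F' s) y := by
    intro s hs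
    have h1 : HasFDerivAt (fun z => v s * (a z s - a y s) * u y s) (F' s) y := by
      have := ((ContinuousLinearMap.mulLeftRight ℝ 𝔸) (v s) (u y s)).hasFDerivAt.comp y
        ((hd s hs).sub_const (a y s))
      simpa [Function.comp_def] using this
    -- replacing `u z s` by `u y s` costs a term of second order in `z - y`
    have h2 : HasFDerivAt (fun z => v s * (a z s - a y s) * (u z s - u y s))
        (0 : E →L[ℝ] 𝔸) y := by
      refine Asymptotics.IsBigO.hasFDerivAt (n := 2) ?_ one_lt_two
      refine Asymptotics.IsBigO.of_bound (M * C * L) ?_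
      filter_upwards [hS] with z hz
      calc _ ≤ ‖v s‖ * ‖a z s - a y s‖ * ‖u z s - u y s‖ := norm_mul₃_le
        _ ≤ M * (C * ‖z - y‖) * (L * ‖z - y‖) := by
          gcongr
          exacts [hM s hs, hC z hz s hs, hlip z hz s hs]
        _ = _ := by rw [norm_pow, norm_norm]; ring
    refine ((h1.add h2).congr_fderiv (add_zero _)).congr_of_eventuallyEq (.of_forall fun z => ?_)
    simp only [hF, Pi.add_apply]
    noncomm_ring
  -- `u z s` has to be bounded uniformly in `z`, hence the intersection with a ball
  have hS' : S ∩ Metric.ball y 1 ∈ 𝓝 y := inter_mem hS (Metric.ball_mem_nhds y one_pos)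
  have hsub : Ioc (0:ℝ) 1 ⊆ Icc 0 1 := Ioc_subset_Icc_self
  have hFy : F y = 0 := by ext s; simp [hF]
  have key := hasFDerivAt_integral_of_dominated_loc_of_lip' (𝕜 := ℝ)
    (μ := volume.restrict (Ioc (0:ℝ) 1)) (F := F) (F' := F') (x₀ := y)
    (bound := fun _ => M * C * (L + N)) hS'
    (fun z _ => ((hFc z).mono hsub).aestronglyMeasurable measurableSet_Ioc)
    (by rw [hFy]; exact integrable_zero _ _ _)
    ((hF'c.mono hsub).aestronglyMeasurable measurableSet_Ioc)
    ((ae_restrict_iff' measurableSet_Ioc).2 (.of_forall fun s hs z hz => by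
      have hs := hsub hs
      have hu1 : ‖u z s‖ ≤ L + N := by
        have h1 : ‖z - y‖ ≤ 1 := by simpa [dist_eq_norm] using (Metric.mem_ball.1 hz.2).le
        calc ‖u z s‖ = ‖(u z s - u y s) + u y s‖ := by rw [sub_add_cancel]
          _ ≤ ‖u z s - u y s‖ + ‖u y s‖ := norm_add_le _ _
          _ ≤ L * ‖z - y‖ + N := add_le_add (hlip z hz.1 s hs) (hN s hs)
          _ ≤ L * 1 + N := by gcongr
          _ = _ := by ring
      rw [hFy, Pi.zero_apply, sub_zero]
      calc _ ≤ ‖v s‖ * ‖a z s - a y s‖ * ‖u z s‖ := norm_mul₃_le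
        _ ≤ M * (C * ‖z - y‖) * (L + N) := by
          gcongr
          exacts [hM s hs, hC z hz.1 s hs]
        _ = _ := by ring))
    (integrable_const _)
    ((ae_restrict_iff' measurableSet_Ioc).2 (.of_forall fun s hs => hFd s (hsub hs)))
  have key2 : HasFDerivAt (fun z => u z 1)
      ((ContinuousLinearMap.mul ℝ 𝔸 (u y 1)).comp (∫ s in (0:ℝ)..1, F' s)) y := by
    have h1 := (ContinuousLinearMap.mul ℝ 𝔸 (u y 1)).hasFDerivAt.comp y (key.2.const_add 1)
    rw [intervalIntegral.integral_of_le zero_le_one]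
    refine h1.congr_of_eventuallyEq (.of_forall fun z => ?_)
    change u z 1 = u y 1 * (1 + ∫ s in Ioc (0:ℝ) 1, F z s)
    rw [hduh z, intervalIntegral.integral_of_le zero_le_one]
  rw [key2.fderiv, ContinuousLinearMap.comp_apply, ContinuousLinearMap.intervalIntegral_apply
    (hF'c.intervalIntegrable_of_Icc zero_le_one)]
  rfl

/-! ### Parallel transport along straight segments -/

/-- `P x y s` is the parallel transport, for the connection one-form `b`, from `y` to the point
`y + s • (x - y)` of the segment from `y` to `x`. In particular `P x y 1` is the path-ordered
exponential of the whole segment. The equation is imposed only on `[0, 1]`, with one-sided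
derivatives at the ends. -/
structure IsTransport (b : E → E →L[ℝ] 𝔸) (P : E → E → ℝ → 𝔸) : Prop where
  zero : ∀ x y, P x y 0 = 1
  deriv : ∀ x y, ∀ s ∈ Icc (0:ℝ) 1, HasDerivWithinAt (P x y)
    (-(b (y + s • (x - y)) (x - y)) * P x y s) (Icc (0:ℝ) 1) s

namespace IsTransport

variable {b : E → E →L[ℝ] 𝔸} {P : E → E → ℝ → 𝔸}

lemma continuousOn_coeff (hb : Continuous b) (x y : E) :
    ContinuousOn (fun s : ℝ => -(b (y + s • (x - y)) (x - y))) (Icc (0:ℝ) 1) := by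
  fun_prop

/-- Reparametrization: transport along part of a segment is transport along the shorter
segment. -/
lemma eq_endpoint (hP : IsTransport b P) (hb : Continuous b) (x y : E) {s : ℝ}
    (hs : s ∈ Icc (0:ℝ) 1) : P x y s = P (y + s • (x - y)) y 1 := by
  have h := linear_ode_unique (continuousOn_coeff hb (y + s • (x - y)) y)
    (u := fun t => P x y (s * t)) (v := P (y + s • (x - y)) y)
    (fun t ht => by
      have hmaps : MapsTo (fun t => s * t) (Icc (0:ℝ) 1) (Icc (0:ℝ) 1) := fun r hr =>
        ⟨mul_nonneg hs.1 hr.1, mul_le_one₀ hs.2 hr.1 hr.2⟩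
      have h1 := (hP.deriv x y (s * t) (hmaps ht)).scomp t
        ((hasDerivWithinAt_id t (Icc (0:ℝ) 1)).const_mul s) hmaps
      refine h1.congr_deriv ?_
      simp only [add_sub_cancel_left, map_smul, smul_smul, mul_one, mul_comm s t]
      rw [← smul_neg, smul_mul_assoc])
    (hP.deriv _ _) (by simp [hP.zero]) 1 (by simp)
  simpa using h

/-- Transport back along the reversed segment is inverse to transport: as functions of `t`, both
`P x y t * P y x 1` and `P y x (1 - t)` solve the transport equation, with the same initial value.
Applied to `(y, x)` as well, this makes `P x y 1` invertible on both sides. -/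
lemma mul_symm (hP : IsTransport b P) (hb : Continuous b) (x y : E) :
    P x y 1 * P y x 1 = 1 := by
  have h := linear_ode_unique (continuousOn_coeff hb x y)
    (u := fun t => P x y t * P y x 1) (v := fun t => P y x (1 - t))
    (fun t ht => by
      refine ((hP.deriv x y t ht).mul_const _).congr_deriv (by rw [mul_assoc]))
    (fun t ht => by
      have hmaps : MapsTo (fun t => 1 - t) (Icc (0:ℝ) 1) (Icc (0:ℝ) 1) := fun r hr =>
        ⟨by linarith [hr.2], by linarith [hr.1]⟩
      have h1 := (hP.deriv y x (1 - t) (hmaps ht)).scomp t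
        ((hasDerivWithinAt_id t (Icc (0:ℝ) 1)).const_sub 1) hmaps
      refine h1.congr_deriv ?_
      have e : x + (1 - t) • (y - x) = y + t • (x - y) := by module
      rw [e, ← neg_sub x y, map_neg, neg_neg, neg_smul, one_smul, neg_mul])
    (by simp [hP.zero]) 1 (by simp)
  simpa [hP.zero] using h

/-- Transport is multiplicative under subdivision of the segment. -/
lemma mul_comp (hP : IsTransport b P) (hb : Continuous b) (x y : E) {s : ℝ}
    (hs : s ∈ Icc (0:ℝ) 1) :
    P x (y + s • (x - y)) 1 * P (y + s • (x - y)) y 1 = P x y 1 := by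
  have h := linear_ode_unique (continuousOn_coeff hb x (y + s • (x - y)))
    (u := fun t => P x (y + s • (x - y)) t * P x y s)
    (v := fun t => P x y (s + (1 - s) * t))
    (fun t ht => by
      refine ((hP.deriv x _ t ht).mul_const _).congr_deriv (by rw [mul_assoc]))
    (fun t ht => by
      have hmaps : MapsTo (fun t => s + (1 - s) * t) (Icc (0:ℝ) 1) (Icc (0:ℝ) 1) := fun r hr =>
        ⟨by nlinarith [hs.1, hs.2, hr.1, hr.2], by nlinarith [hs.1, hs.2, hr.1, hr.2]⟩
      have h1 := (hP.deriv x y (s + (1 - s) * t) (hmaps ht)).scomp t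
        (((hasDerivWithinAt_id t (Icc (0:ℝ) 1)).const_mul (1 - s)).const_add s) hmaps
      refine h1.congr_deriv ?_
      have e : y + s • (x - y) + t • (x - (y + s • (x - y)))
        = y + (s + (1 - s) * t) • (x - y) := by module
      have e' : x - (y + s • (x - y)) = (1 - s) • (x - y) := by module
      rw [e, e', map_smul, mul_one, ← smul_neg, smul_mul_assoc])
    (by simp [hP.zero]) 1 (by simp)
  simpa [hP.eq_endpoint hb x y hs] using h

lemma fderiv_coeff (hb : ContDiff ℝ 2 b) (x y h : E) (s : ℝ) :
    fderiv ℝ (fun z => -(b (z + s • (x - z)) (x - z))) y h =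
      b (y + s • (x - y)) h - (1 - s) • fderiv ℝ b (y + s • (x - y)) h (x - y) := by
  have h1 : HasFDerivAt (fun z => z + s • (x - z)) ((1 - s) • ContinuousLinearMap.id ℝ E) y := by
    refine ((hasFDerivAt_id y).add (((hasFDerivAt_id y).const_sub x).const_smul s)).congr_fderiv ?_
    ext v; simp; module
  have h2 : HasFDerivAt (fun z => x - z) (-ContinuousLinearMap.id ℝ E) y :=
    (hasFDerivAt_id y).const_sub x
  have h3 := ((hb.differentiable two_ne_zero) (y + s • (x - y))).hasFDerivAt.comp y h1
  have h4 : HasFDerivAt (fun z => -(b (z + s • (x - z)) (x - z))) _ y := (h3.clm_apply h2).neg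
  rw [h4.fderiv]
  simp
  abel

/-- The parameter derivative of the transport before integrating by parts. Smoothness of `b`,
together with compactness of a closed ball around `y` times `[0, 1]`, gives the uniform bounds
required by `fderiv_linear_ode`. -/
lemma fderiv_snd_eq [FiniteDimensional ℝ E] [CompleteSpace 𝔸] (hP : IsTransport b P)
    (hb : ContDiff ℝ 2 b) (x y h : E) :
    fderiv ℝ (fun z => P x z 1) y h = P x y 1 * ∫ s in (0:ℝ)..1,
      P y (y + s • (x - y)) 1 *
        (b (y + s • (x - y)) h - (1 - s) • fderiv ℝ b (y + s • (x - y)) h (x - y)) *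
        P x y s := by
  set a : E → ℝ → 𝔸 := fun z s => -(b (z + s • (x - z)) (x - z)) with ha
  have hab : ContDiff ℝ 2 (fun p : E × ℝ => a p.1 p.2) := by
    simp only [ha]
    fun_prop
  have hac := hab.continuous
  have hfc : Continuous (fderiv ℝ (fun p : E × ℝ => a p.1 p.2)) :=
    hab.continuous_fderiv two_ne_zero
  set D : E → ℝ → E →L[ℝ] 𝔸 := fun z s =>
    (fderiv ℝ (fun p : E × ℝ => a p.1 p.2) (z, s)).comp (ContinuousLinearMap.inl ℝ E ℝ) with hD
  have hDc : Continuous (fun p : E × ℝ => D p.1 p.2) :=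
    hfc.clm_comp continuous_const
  have hDd : ∀ z s, HasFDerivAt (fun z => a z s) (D z s) z := by
    intro z s
    exact ((hab.differentiable two_ne_zero) (z, s)).hasFDerivAt.comp (f := fun w => (w, s)) z
      (hasFDerivAt_prodMk_left z s)
  have hcomp : IsCompact (Metric.closedBall y 1 ×ˢ Icc (0:ℝ) 1) :=
    (isCompact_closedBall y 1).prod isCompact_Icc
  obtain ⟨K, hK⟩ := hcomp.exists_bound_of_continuousOn hac.continuousOn
  obtain ⟨C, hC⟩ := hcomp.exists_bound_of_continuousOn hDc.continuousOn
  have key := fderiv_linear_ode (a := a) (u := P x) (v := fun s => P y (y + s • (x - y)) 1)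
    (a' := D y) (y := y) (K := K) (C := C) (S := Metric.closedBall y 1)
    (Metric.closedBall_mem_nhds y one_pos) (hP.zero x) (hP.deriv x)
    (fun s hs => by rw [hP.eq_endpoint hb.continuous x y hs]; exact hP.mul_symm hb.continuous _ _)
    (fun s hs => by rw [hP.eq_endpoint hb.continuous x y hs]; exact hP.mul_symm hb.continuous _ _)
    (fun z => continuousOn_coeff hb.continuous x z)
    (hDc.comp (Continuous.prodMk_right y)).continuousOn
    (fun z hz s hs => hK (z, s) ⟨hz, hs⟩)
    (fun z hz s hs => (convex_closedBall y 1).norm_image_sub_le_of_norm_hasFDerivWithin_le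
      (𝕜 := ℝ) (f := fun z => a z s) (f' := fun z => D z s)
      (fun w _ => (hDd w s).hasFDerivWithinAt) (fun w hw => hC (w, s) ⟨hw, hs⟩)
      (Metric.mem_closedBall_self zero_le_one) hz)
    (fun s _ => hDd y s) h
  rw [key]
  simp only [← (hDd y _).fderiv, ha, fderiv_coeff hb]

/-- Coordinate-free form of the derivative formula. The derivative of
`(1 - s) • (v s * b h * P x y s)` is `(1 - s)` times the transported curvature minus the integrand
of `fderiv_snd_eq`, and its boundary values are `b y h` at `0` and `0` at `1`. -/
lemma fderiv_snd [FiniteDimensional ℝ E] [CompleteSpace 𝔸] (hP : IsTransport b P)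
    (hb : ContDiff ℝ 2 b) (x y h : E) :
    fderiv ℝ (fun z => P x z 1) y h - P x y 1 * b y h = -∫ s in (0:ℝ)..1, s •
      (P x (x + s • (y - x)) 1 *
        (fderiv ℝ b (x + s • (y - x)) (y - x) h - fderiv ℝ b (x + s • (y - x)) h (y - x) +
          (b (x + s • (y - x)) (y - x) * b (x + s • (y - x)) h
            - b (x + s • (y - x)) h * b (x + s • (y - x)) (y - x))) *
        P (x + s • (y - x)) y 1) := by
  have hbc := hb.continuous
  have hbd : Continuous (fderiv ℝ b) := hb.continuous_fderiv two_ne_zero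
  set v : ℝ → 𝔸 := fun s => P y (y + s • (x - y)) 1 with hv
  have huv : ∀ s ∈ Icc (0:ℝ) 1, P x y s * v s = 1 := fun s hs => by
    rw [hP.eq_endpoint hbc x y hs]; exact hP.mul_symm hbc _ _
  have hvu : ∀ s ∈ Icc (0:ℝ) 1, v s * P x y s = 1 := fun s hs => by
    rw [hP.eq_endpoint hbc x y hs]; exact hP.mul_symm hbc _ _
  have hvd := hasDerivWithinAt_of_two_sided_inverse (hP.deriv x y) huv hvu
  have hvc : ContinuousOn v (Icc (0:ℝ) 1) := fun s hs => (hvd s hs).continuousWithinAt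
  have huc : ContinuousOn (P x y) (Icc (0:ℝ) 1) :=
    fun s hs => (hP.deriv x y s hs).continuousWithinAt
  -- the curvature contracted with `x - y` and `h`
  set R : ℝ → 𝔸 := fun s => fderiv ℝ b (y + s • (x - y)) (x - y) h
      - fderiv ℝ b (y + s • (x - y)) h (x - y)
      + (b (y + s • (x - y)) (x - y) * b (y + s • (x - y)) h
        - b (y + s • (x - y)) h * b (y + s • (x - y)) (x - y)) with hR
  have hRc : Continuous R := by simp only [hR]; fun_prop
  set D : ℝ → 𝔸 := fun s =>
    b (y + s • (x - y)) h - (1 - s) • fderiv ℝ b (y + s • (x - y)) h (x - y) with hD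
  have hDc : Continuous D := by simp only [hD]; fun_prop
  have hbz : ∀ s : ℝ, HasDerivAt (fun s : ℝ => b (y + s • (x - y)) h)
      (fderiv ℝ b (y + s • (x - y)) (x - y) h) s := by
    intro s
    have h1 : HasDerivAt (fun s : ℝ => y + s • (x - y)) (x - y) s := by
      simpa using ((hasDerivAt_id s).smul_const (x - y)).const_add y
    have h2 := ((hb.differentiable two_ne_zero) (y + s • (x - y))).hasFDerivAt.comp_hasDerivAt s h1
    simpa using h2.clm_apply (hasDerivAt_const s h)
  have hG : ∀ s ∈ Icc (0:ℝ) 1, HasDerivWithinAt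
      (fun s => (1 - s) • (v s * b (y + s • (x - y)) h * P x y s))
      ((1 - s) • (v s * R s * P x y s) - v s * D s * P x y s) (Icc (0:ℝ) 1) s := by
    intro s hs
    have h1 := (((hvd s hs).mul (hbz s).hasDerivWithinAt).mul (hP.deriv x y s hs))
    have h2 := (((hasDerivWithinAt_id s (Icc (0:ℝ) 1)).const_sub 1).smul h1)
    refine h2.congr_deriv ?_
    simp only [hR, hD, id, Pi.mul_apply, mul_add, mul_sub, add_mul, sub_mul, neg_mul, mul_neg,
      mul_smul_comm, smul_mul_assoc, neg_smul, one_smul, mul_assoc]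
    module
  have hi1 : IntervalIntegrable (fun s => (1 - s) • (v s * R s * P x y s)) volume 0 1 := by
    apply ContinuousOn.intervalIntegrable_of_Icc zero_le_one
    exact (continuousOn_const.sub continuousOn_id).smul ((hvc.mul hRc.continuousOn).mul huc)
  have hi2 : IntervalIntegrable (fun s => v s * D s * P x y s) volume 0 1 :=
    ((hvc.mul hDc.continuousOn).mul huc).intervalIntegrable_of_Icc zero_le_one
  have hftc := intervalIntegral.integral_eq_sub_of_hasDerivAt_of_le zero_le_one
    (fun s hs => (hG s hs).continuousWithinAt)
    (fun s hs => (hG s (Ioo_subset_Icc_self hs)).hasDerivAt (Icc_mem_nhds hs.1 hs.2))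
    (hi1.sub hi2)
  have hv0 : v 0 = 1 := by have := huv 0 (by simp); rwa [hP.zero, one_mul] at this
  rw [intervalIntegral.integral_sub hi1 hi2] at hftc
  simp only [sub_self, zero_smul, sub_zero, one_smul, add_zero, hv0, hP.zero, one_mul,
    mul_one, zero_sub] at hftc
  rw [hP.fderiv_snd_eq hb]
  change P x y 1 * (∫ s in (0:ℝ)..1, v s * D s * P x y s) - _ = _
  rw [← mul_sub, show (∫ s in (0:ℝ)..1, v s * D s * P x y s) - b y h
    = ∫ s in (0:ℝ)..1, (1 - s) • (v s * R s * P x y s) by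
      rw [sub_eq_iff_eq_add.1 hftc]; abel]
  -- reverse the parametrization of the segment
  have hrev := intervalIntegral.integral_comp_sub_left (a := 0) (b := 1)
    (fun s => (1 - s) • (v s * R s * P x y s)) 1
  rw [sub_self, sub_zero] at hrev
  have hmul := (ContinuousLinearMap.mul ℝ 𝔸 (P x y 1)).intervalIntegral_comp_comm
    (show IntervalIntegrable (fun s => (1 - (1 - s)) • (v (1 - s) * R (1 - s) * P x y (1 - s)))
      volume 0 1 by simpa using (hi1.comp_sub_left 1).symm)
  simp only [ContinuousLinearMap.mul_apply'] at hmul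
  rw [← hrev, ← hmul, ← intervalIntegral.integral_neg]
  refine intervalIntegral.integral_congr fun s hs => ?_
  rw [uIcc_of_le zero_le_one] at hs
  have hs' : 1 - s ∈ Icc (0:ℝ) 1 := ⟨by linarith [hs.2], by linarith [hs.1]⟩
  have e : y + (1 - s) • (x - y) = x + s • (y - x) := by module
  have hx := hP.mul_comp hbc x y hs'
  have hy := hvu _ hs'
  simp only [hv, hR, hP.eq_endpoint hbc x y hs', e] at hx hy ⊢
  have hxv : P x y 1 * P y (x + s • (y - x)) 1 = P x (x + s • (y - x)) 1 := by
    rw [← hx, mul_assoc, hP.mul_symm hbc, mul_one]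
  rw [← hxv, ← neg_sub y x]
  simp only [map_neg, neg_apply, sub_sub_cancel, mul_smul_comm, ← smul_neg]
  congr 1
  noncomm_ring

end IsTransport

end Abstract

/-! ### Matrices as operators, and components of the connection -/

/-- Matrices as operators on `ℂ^m`, as a real topological isomorphism. The entrywise sup norm on
matrices is not submultiplicative, whereas the operators form a Banach algebra. -/
noncomputable def matrixToOperator (m : ℕ) :
    Matrix (Fin m) (Fin m) ℂ ≃L[ℝ] (EuclideanSpace ℂ (Fin m) →L[ℂ] EuclideanSpace ℂ (Fin m)) :=
  LinearEquiv.toContinuousLinearEquiv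
    { Matrix.toEuclideanCLM (n := Fin m) (𝕜 := ℂ) with
      map_smul' := fun c A => by
        have := map_smul (Matrix.toEuclideanCLM (n := Fin m) (𝕜 := ℂ)) (c : ℂ) A
        rw [Complex.coe_smul, Complex.coe_smul] at this
        exact this }

lemma matrixToOperator_mul {m : ℕ} (A B : Matrix (Fin m) (Fin m) ℂ) :
    matrixToOperator m (A * B) = matrixToOperator m A * matrixToOperator m B :=
  map_mul (Matrix.toEuclideanCLM (n := Fin m) (𝕜 := ℂ)) A B

lemma matrixToOperator_one {m : ℕ} : matrixToOperator m 1 = 1 :=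
  map_one (Matrix.toEuclideanCLM (n := Fin m) (𝕜 := ℂ))

/-- The connection one-form `v ↦ v^ν B_ν(z)`, with values in operators. -/
noncomputable def connectionForm {d m : ℕ}
    (B : Fin d → EuclideanSpace ℝ (Fin d) → Matrix (Fin m) (Fin m) ℂ)
    (z : EuclideanSpace ℝ (Fin d)) :
    EuclideanSpace ℝ (Fin d) →L[ℝ] (EuclideanSpace ℂ (Fin m) →L[ℂ] EuclideanSpace ℂ (Fin m)) :=
  ∑ ν, (EuclideanSpace.proj ν : EuclideanSpace ℝ (Fin d) →L[ℝ] ℝ).smulRight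
    (matrixToOperator m (B ν z))

lemma connectionForm_apply {d m : ℕ}
    (B : Fin d → EuclideanSpace ℝ (Fin d) → Matrix (Fin m) (Fin m) ℂ)
    (z v : EuclideanSpace ℝ (Fin d)) :
    connectionForm B z v = matrixToOperator m (∑ ν, v ν • B ν z) := by
  simp [connectionForm, map_sum]

lemma connectionForm_single {d m : ℕ}
    (B : Fin d → EuclideanSpace ℝ (Fin d) → Matrix (Fin m) (Fin m) ℂ)
    (z : EuclideanSpace ℝ (Fin d)) (μ : Fin d) :
    connectionForm B z (EuclideanSpace.single μ 1) = matrixToOperator m (B μ z) := by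
  rw [connectionForm_apply]
  congr 1
  simp [PiLp.single_apply, ite_smul]

lemma contDiff_connectionForm {d m : ℕ}
    {B : Fin d → EuclideanSpace ℝ (Fin d) → Matrix (Fin m) (Fin m) ℂ}
    (hB : ∀ μ, ContDiff ℝ (⊤ : ℕ∞) (B μ)) : ContDiff ℝ 2 (connectionForm B) := by
  unfold connectionForm
  refine ContDiff.sum fun ν _ => ContDiff.smulRight contDiff_const ?_
  exact (matrixToOperator m).contDiff.comp ((hB ν).of_le (WithTop.coe_le_coe.2 (le_top : (2 : ℕ∞) ≤ ⊤)))

lemma fderiv_connectionForm_apply {d m : ℕ}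
    {B : Fin d → EuclideanSpace ℝ (Fin d) → Matrix (Fin m) (Fin m) ℂ}
    (hB : ∀ μ, ContDiff ℝ (⊤ : ℕ∞) (B μ)) (z v w : EuclideanSpace ℝ (Fin d)) :
    fderiv ℝ (connectionForm B) z v w = matrixToOperator m (∑ ν, w ν • fderiv ℝ (B ν) z v) := by
  have h1 : fderiv ℝ (connectionForm B) z v w = fderiv ℝ (fun z => connectionForm B z w) z v := by
    have h := ((contDiff_connectionForm hB).differentiable two_ne_zero z).hasFDerivAt
    have := h.clm_apply (hasFDerivAt_const w z)
    rw [this.fderiv]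
    simp
  have h2 : HasFDerivAt (fun z => ∑ ν, w ν • B ν z) (∑ ν, w ν • fderiv ℝ (B ν) z) z :=
    HasFDerivAt.fun_sum fun ν _ =>
      (((hB ν).differentiable (by simp)) z).hasFDerivAt.const_smul (w ν)
  have h3 := ((matrixToOperator m).hasFDerivAt.comp z h2).fderiv
  rw [h1]
  simp only [connectionForm_apply]
  refine (congrArg (fun L => L v) h3).trans ?_
  change matrixToOperator m ((∑ ν, w ν • fderiv ℝ (B ν) z) v) = _
  simp

lemma fderiv_connectionForm_single {d m : ℕ}
    {B : Fin d → EuclideanSpace ℝ (Fin d) → Matrix (Fin m) (Fin m) ℂ}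
    (hB : ∀ μ, ContDiff ℝ (⊤ : ℕ∞) (B μ)) (z v : EuclideanSpace ℝ (Fin d)) (μ : Fin d) :
    fderiv ℝ (connectionForm B) z v (EuclideanSpace.single μ 1) =
      matrixToOperator m (∑ ν, v ν • pd ν (B μ) z) := by
  rw [fderiv_connectionForm_apply hB]
  congr 1
  have hv : v = ∑ ν, v ν • EuclideanSpace.single ν (1:ℝ) := by
    ext i; simp [Pi.single_apply]
  conv_lhs => rw [hv]
  simp [PiLp.single_apply, ite_smul, pd, map_sum]

/-- The curvature of `connectionForm B`, evaluated on `v` and the `μ`-th basis vector, is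
`v^ν F_{νμ}`. -/
lemma curvature_connectionForm {d m : ℕ}
    {B : Fin d → EuclideanSpace ℝ (Fin d) → Matrix (Fin m) (Fin m) ℂ}
    (hB : ∀ μ, ContDiff ℝ (⊤ : ℕ∞) (B μ)) (z v : EuclideanSpace ℝ (Fin d)) (μ : Fin d) :
    fderiv ℝ (connectionForm B) z v (EuclideanSpace.single μ 1)
      - fderiv ℝ (connectionForm B) z (EuclideanSpace.single μ 1) v
      + (connectionForm B z v * connectionForm B z (EuclideanSpace.single μ 1)
        - connectionForm B z (EuclideanSpace.single μ 1) * connectionForm B z v)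
      = matrixToOperator m (∑ ν, v ν • Fstr B ν μ z) := by
  rw [fderiv_connectionForm_single hB, fderiv_connectionForm_apply hB, connectionForm_single,
    connectionForm_apply, ← matrixToOperator_mul, ← matrixToOperator_mul, ← map_sub, ← map_sub,
    ← map_add]
  congr 1
  simp only [Fstr, pd, Finset.sum_mul, Finset.mul_sum, smul_add, smul_sub,
    Finset.sum_add_distrib, Finset.sum_sub_distrib, smul_mul_assoc, mul_smul_comm]

theorem deriv_pathOrderedExp_snd
    (d m : ℕ) (hd : 0 < d) (hm : 0 < m)
    (B : Fin d → EuclideanSpace ℝ (Fin d) → Matrix (Fin m) (Fin m) ℂ)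
    (hB : ∀ μ, ContDiff ℝ (⊤ : ℕ∞) (B μ))
    (P : EuclideanSpace ℝ (Fin d) → EuclideanSpace ℝ (Fin d) → ℝ →
      Matrix (Fin m) (Fin m) ℂ)
    (hP0 : ∀ x y, P x y 0 = 1)
    (hP : ∀ x y, ∀ s ∈ Set.Icc (0:ℝ) 1, HasDerivWithinAt (P x y)
      (-(∑ μ, (x μ - y μ) • B μ (y + s • (x - y))) * P x y s) (Set.Icc (0:ℝ) 1) s)
    (Φ : EuclideanSpace ℝ (Fin d) → EuclideanSpace ℝ (Fin d) →
      Matrix (Fin m) (Fin m) ℂ)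
    (hΦ : ∀ x y, Φ x y = P x y 1)
    (x y : EuclideanSpace ℝ (Fin d)) (μ : Fin d) :
    fderiv ℝ (fun y' => Φ x y') y (EuclideanSpace.single μ 1) - Φ x y * B μ y
      = -∫ s in (0:ℝ)..1, s • ∑ ν, (y ν - x ν) •
          (Φ x (x + s • (y - x)) * Fstr B ν μ (x + s • (y - x)) *
            Φ (x + s • (y - x)) y) := by
  have hT : IsTransport (connectionForm B) (fun x y s => matrixToOperator m (P x y s)) := by
    refine ⟨fun x y => by rw [hP0, matrixToOperator_one], fun x y s hs => ?_⟩
    have h := (matrixToOperator m).hasFDerivAt.comp_hasDerivWithinAt s (hP x y s hs)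
    refine h.congr_deriv ?_
    rw [connectionForm_apply, ← map_neg, ← matrixToOperator_mul]
    rfl
  have key := hT.fderiv_snd (contDiff_connectionForm hB) x y (EuclideanSpace.single μ 1)
  simp only [curvature_connectionForm hB] at key
  simp only [connectionForm_single, ← matrixToOperator_mul,
    ← hΦ] at key
  have hfd : fderiv ℝ (fun z => matrixToOperator m (Φ x z)) y (EuclideanSpace.single μ 1)
      = matrixToOperator m (fderiv ℝ (fun y' => Φ x y') y (EuclideanSpace.single μ 1)) := by
    have := (matrixToOperator m).comp_fderiv (f := fun z => Φ x z) (x := y)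
    exact congrArg (fun L => L (EuclideanSpace.single μ 1)) this
  simp only [hfd, ← map_smul, ← map_sub] at key
  have hint : ∀ f : ℝ → Matrix (Fin m) (Fin m) ℂ,
      ∫ s in (0:ℝ)..1, matrixToOperator m (f s) = matrixToOperator m (∫ s in (0:ℝ)..1, f s) := by
    intro f
    simp only [intervalIntegral.integral_of_le zero_le_one]
    exact (matrixToOperator m).integral_comp_comm f
  rw [hint, ← map_neg] at key
  rw [(matrixToOperator m).injective key]
  congr 1
  refine intervalIntegral.integral_congr fun s _ => ?_
  simp [Finset.mul_sum, Finset.sum_mul]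
end

section
/- (Covariant Taylor expansion.) Let f : ℝ^d → M_m(ℂ) be smooth, let y, u ∈ ℝ^d and n ≥ 0. Then the n-th derivative at t = 0 of the map t ↦ Φ(y, y+tu) f(y+tu) Φ(y+tu, y) equals u^{μ_1} ⋯ u^{μ_n} ∇_{μ_1} ⋯ ∇_{μ_n} f(y), where ∇_μ g = ∂_μ g + [B_μ, g] and summation over each repeated index μ_i = 1,…,d is implied. -/
/-! Write `W(t) = Φ(y + tu, y)`, `V(t) = Φ(y, y + tu)` and `A(t) = u^μ B_μ(y + tu)`. Uniqueness for
linear differential equations shows that `W` solves `W' = -A W` on all of `ℝ` and that `V W = 1`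
(`line_transport`), so `V = W⁻¹` solves `V' = V A` (`hasDerivAt_left_inverse`). For smooth `g` the
product rule then gives `(V g W)' = V (u^μ ∂_μ g + [A, g]) W = V (u^μ ∇_μ g) W` along the line.
Iterating, the `n`-th derivative of `V f W` is `V ((u^μ ∇_μ)^n f) W`. At `t = 0` both transports
are `1`, and `iterate_dirNab` expands the power into the sum over multi-indices. -/

/- STATEMENT 4 (covariant Taylor expansion): for smooth `f`, the `n`-th
derivative at `t = 0` of `t ↦ Φ(y, y+tu) f(y+tu) Φ(y+tu, y)` equals
`u^{μ_1} ⋯ u^{μ_n} ∇_{μ_1} ⋯ ∇_{μ_n} f(y)`, where `∇_μ g = ∂_μ g + [B_μ, g]`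
and repeated indices are summed over `1,…,d`. -/

attribute [local instance] Matrix.normedAddCommGroup Matrix.normedSpace

/-- The adjoint covariant derivative `∇_μ g = ∂_μ g + [B_μ, g]`. -/
noncomputable def nab {d m : ℕ}
    (B : Fin d → EuclideanSpace ℝ (Fin d) → Matrix (Fin m) (Fin m) ℂ)
    (μ : Fin d) (g : EuclideanSpace ℝ (Fin d) → Matrix (Fin m) (Fin m) ℂ) :
    EuclideanSpace ℝ (Fin d) → Matrix (Fin m) (Fin m) ℂ :=
  fun x => pd μ g x + (B μ x * g x - g x * B μ x)

/-- Iterated adjoint covariant derivative; the head of the list acts outermost. -/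
noncomputable def nabL {d m : ℕ}
    (B : Fin d → EuclideanSpace ℝ (Fin d) → Matrix (Fin m) (Fin m) ℂ) :
    List (Fin d) → (EuclideanSpace ℝ (Fin d) → Matrix (Fin m) (Fin m) ℂ) →
      EuclideanSpace ℝ (Fin d) → Matrix (Fin m) (Fin m) ℂ
  | [], g => g
  | μ :: l, g => nab B μ (nabL B l g)

/-! ### Parallel transport along a line in a normed ring -/

section transport

/-- Solutions of `X' = M X` on `[0, 1]` are the solution starting at `1`, multiplied on the right
by the initial value: both sides solve the same Lipschitz equation. -/
lemma linear_ode_unique_s4 {R : Type*} [NormedRing R] [NormedAlgebra ℝ R] {M P Q : ℝ → R}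
    (hM : Continuous M) (hP0 : P 0 = 1)
    (hP : ∀ s ∈ Set.Icc (0:ℝ) 1, HasDerivWithinAt P (M s * P s) (Set.Icc (0:ℝ) 1) s)
    (hQ : ∀ s ∈ Set.Icc (0:ℝ) 1, HasDerivWithinAt Q (M s * Q s) (Set.Icc (0:ℝ) 1) s) :
    Q 1 = P 1 * Q 0 := by
  obtain ⟨K, hK⟩ := (isCompact_Icc (a := (0:ℝ)) (b := 1)).exists_bound_of_continuousOn
    (f := M) hM.continuousOn
  have key : ∀ X : ℝ → R,
      (∀ s ∈ Set.Icc (0:ℝ) 1, HasDerivWithinAt X (M s * X s) (Set.Icc (0:ℝ) 1) s) →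
      ContinuousOn X (Set.Icc (0:ℝ) 1) ∧
      ∀ s ∈ Set.Ico (0:ℝ) 1, HasDerivWithinAt X (M s * X s) (Set.Ici s) s :=
    fun X hX => ⟨fun s hs => (hX s hs).continuousWithinAt, fun s hs =>
      (hX s ⟨hs.1, hs.2.le⟩).mono_of_mem_nhdsWithin
        (Filter.mem_of_superset (Icc_mem_nhdsGE hs.2) (Set.Icc_subset_Icc_left hs.1))⟩
  have hPQ : ∀ s ∈ Set.Icc (0:ℝ) 1, HasDerivWithinAt (fun s => P s * Q 0)
      (M s * (P s * Q 0)) (Set.Icc (0:ℝ) 1) s := by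
    intro s hs
    simpa [mul_assoc] using (hP s hs).mul_const (Q 0)
  have := ODE_solution_unique_of_mem_Icc_right (v := fun s X => M s * X)
    (s := fun _ => Set.univ) (K := K.toNNReal) (a := 0) (b := 1) (f := Q)
    (g := fun s => P s * Q 0) ?_ (key _ hQ).1 (key _ hQ).2 (fun _ _ => trivial)
    (key _ hPQ).1 (key _ hPQ).2 (fun _ _ => trivial) (by simp [hP0])
  · exact this ⟨zero_le_one, le_rfl⟩
  · intro s hs
    refine LipschitzOnWith.of_dist_le_mul fun X _ Y _ => ?_
    rw [dist_eq_norm, dist_eq_norm, ← mul_sub]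
    refine (norm_mul_le _ _).trans (mul_le_mul_of_nonneg_right ?_ (norm_nonneg _))
    exact (hK s ⟨hs.1, hs.2.le⟩).trans (Real.le_coe_toNNReal K)

/-- Let `T a b` be the transport for `X' = -A X` along `[a, b]`, rescaled to the parameter interval
`[0, 1]`, so that `T a b 1` carries a solution from time `a` to time `b`. Then `t ↦ T 0 t 1` is a
two-sided solution of the equation, with left inverse `T t 0 1`. Each `T 0 t` is given by an
equation of its own; they are compared through a single solution on an interval `[-N, N]`. -/
lemma line_transport {R : Type*} [NormedRing R] [IsDedekindFiniteMonoid R] [NormedAlgebra ℝ R]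
    {A : ℝ → R}
    (hA : Continuous A) {T : ℝ → ℝ → ℝ → R} (hT0 : ∀ a b, T a b 0 = 1)
    (hT : ∀ a b, ∀ s ∈ Set.Icc (0:ℝ) 1, HasDerivWithinAt (T a b)
      ((-((b - a) • A (a + s * (b - a)))) * T a b s) (Set.Icc (0:ℝ) 1) s) (t : ℝ) :
    HasDerivAt (fun t => T 0 t 1) (-A t * T 0 t 1) t ∧
      T t 0 1 * T 0 t 1 = 1 ∧ T 0 0 1 = 1 := by
  obtain ⟨N, hN⟩ : ∃ N : ℝ, |t| < N := exists_gt _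
  have hN0 : 0 < N := (abs_nonneg t).trans_lt hN
  have htN := abs_lt.1 hN
  -- The solution on `[-N, N]` equal to `1` at `-N`, read off from the single transport `T (-N) N`.
  set E : ℝ → R := fun τ => T (-N) N ((2 * N)⁻¹ * (τ + N)) with hE
  have hE' : ∀ τ ∈ Set.Icc (-N) N, HasDerivWithinAt E (-A τ * E τ) (Set.Icc (-N) N) τ := by
    intro τ hτ
    have hmaps : Set.MapsTo (fun τ => (2 * N)⁻¹ * (τ + N)) (Set.Icc (-N) N)
        (Set.Icc (0:ℝ) 1) := by
      intro σ hσ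
      refine ⟨mul_nonneg (by positivity) (by linarith [hσ.1]), ?_⟩
      rw [inv_mul_le_iff₀ (by positivity)]
      linarith [hσ.2]
    have h1 : HasDerivWithinAt (fun τ => (2 * N)⁻¹ * (τ + N)) (2 * N)⁻¹ (Set.Icc (-N) N) τ := by
      simpa using (((hasDerivAt_id τ).add_const N).const_mul (2 * N)⁻¹).hasDerivWithinAt
    have h2 := (hT (-N) N _ (hmaps hτ)).scomp τ h1 hmaps
    have e1 : N - -N = 2 * N := by ring
    have e2 : -N + (2 * N)⁻¹ * (τ + N) * (2 * N) = τ := by field_simp; ring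
    refine h2.congr_deriv ?_
    rw [e1, e2, ← smul_neg, smul_mul_assoc, smul_smul, inv_mul_cancel₀ (by positivity), one_smul]
  -- Transport from `b` to `c`, in either direction, carries `E b` to `E c`.
  have hcomp : ∀ b ∈ Set.Icc (-N) N, ∀ c ∈ Set.Icc (-N) N, E c = T b c 1 * E b := by
    intro b hb c hc
    have hmaps : Set.MapsTo (fun s => b + s * (c - b)) (Set.Icc (0:ℝ) 1) (Set.Icc (-N) N) := by
      intro s hs
      have := (convex_Icc (-N) N).add_smul_sub_mem hb hc hs
      simpa using this
    have h := linear_ode_unique_s4 (M := fun s => -((c - b) • A (b + s * (c - b))))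
      (P := T b c) (Q := fun s => E (b + s * (c - b))) (by fun_prop) (hT0 b c) (hT b c) ?_
    · simpa using h
    · intro s hs
      have h1 : HasDerivWithinAt (fun s => b + s * (c - b)) (c - b) (Set.Icc (0:ℝ) 1) s := by
        simpa using (((hasDerivAt_id s).mul_const (c - b)).const_add b).hasDerivWithinAt
      have h2 := (hE' _ (hmaps hs)).scomp s h1 hmaps
      refine h2.congr_deriv ?_
      rw [← smul_neg, smul_mul_assoc]
  have hleft : (-N) ∈ Set.Icc (-N) N := ⟨le_rfl, by linarith⟩
  have hzero : (0:ℝ) ∈ Set.Icc (-N) N := ⟨by linarith, hN0.le⟩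
  have hEl : E (-N) = 1 := by simp [hE, hT0]
  have hinv : ∀ b ∈ Set.Icc (-N) N, E b * T b (-N) 1 = 1 := by
    intro b hb
    -- `T b (-N) 1` carries `E b` back to `1`, so it is a left inverse, hence a right one.
    refine mul_eq_one_comm.1 ?_
    rw [← hcomp b hb _ hleft, hEl]
  have hW : ∀ τ ∈ Set.Icc (-N) N, T 0 τ 1 = E τ * T 0 (-N) 1 := by
    intro τ hτ
    rw [hcomp 0 hzero τ hτ, mul_assoc, hinv 0 hzero, mul_one]
  have ht : t ∈ Set.Icc (-N) N := ⟨htN.1.le, htN.2.le⟩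
  refine ⟨?_, ?_, ?_⟩
  · have hn : Set.Icc (-N) N ∈ nhds t := Icc_mem_nhds htN.1 htN.2
    have h1 := ((hE' t ht).hasDerivAt hn).mul_const (T 0 (-N) 1)
    rw [mul_assoc, ← hW t ht] at h1
    exact h1.congr_of_eventuallyEq (Filter.eventually_of_mem hn hW)
  · rw [hW t ht, ← mul_assoc, ← hcomp t ht 0 hzero, hinv 0 hzero]
  · rw [hW 0 hzero, hinv 0 hzero]

lemma hasDerivAt_left_inverse {R : Type*} [NormedRing R] [NormedAlgebra ℝ R] [CompleteSpace R]
    [IsDedekindFiniteMonoid R] {a b : ℝ → R} {a' : R} {t : ℝ}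
    (ha : HasDerivAt a a' t) (hba : ∀ t, b t * a t = 1) :
    HasDerivAt b (-(b t * a' * b t)) t := by
  let U : ℝ → Rˣ := fun t => ⟨a t, b t, mul_eq_one_comm.1 (hba t), hba t⟩
  have e : b = fun t => Ring.inverse (a t) := by
    funext t
    exact (Ring.inverse_unit (U t)).symm
  have h2 := HasFDerivAt.comp_hasDerivAt t (hasFDerivAt_ringInverse (𝕜 := ℝ) (U t)) ha
  refine (h2.congr_of_eventuallyEq (.of_eq e)).congr_deriv ?_
  simp [U]

end transport

/-! ### The directional covariant derivative -/

section cov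
variable {d m : ℕ} {B : Fin d → EuclideanSpace ℝ (Fin d) → Matrix (Fin m) (Fin m) ℂ}

/-- The product rule for matrices. Differentiability on `ℝ` only involves the topology of the
target, so it may be checked with the operator norm, which makes matrices a normed ring. -/
lemma hasDerivAt_matrix_mul {a b : ℝ → Matrix (Fin m) (Fin m) ℂ}
    {a' b' : Matrix (Fin m) (Fin m) ℂ} {t : ℝ}
    (ha : HasDerivAt a a' t) (hb : HasDerivAt b b' t) :
    HasDerivAt (fun t => a t * b t) (a' * b t + a t * b') t := by
  let _ : NormedRing (Matrix (Fin m) (Fin m) ℂ) := Matrix.linftyOpNormedRing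
  let _ : NormedAlgebra ℝ (Matrix (Fin m) (Fin m) ℂ) := Matrix.linftyOpNormedAlgebra
  exact HasDerivAt.fun_mul ha hb

/-- Smoothness refers to the entrywise norm, for which matrices are not a normed ring; hence the
reduction to entries. -/
lemma contDiff_matrix_mul {g h : EuclideanSpace ℝ (Fin d) → Matrix (Fin m) (Fin m) ℂ}
    (hg : ContDiff ℝ (⊤ : ℕ∞) g) (hh : ContDiff ℝ (⊤ : ℕ∞) h) :
    ContDiff ℝ (⊤ : ℕ∞) fun x => g x * h x := by
  refine contDiff_pi.2 fun i => contDiff_pi.2 fun j => ?_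
  simp only [Matrix.mul_apply]
  exact ContDiff.sum fun k _ => (contDiff_pi.1 (contDiff_pi.1 hg i) k).mul
    (contDiff_pi.1 (contDiff_pi.1 hh k) j)

lemma contDiff_nab (hB : ∀ μ, ContDiff ℝ (⊤ : ℕ∞) (B μ)) (μ : Fin d)
    {g : EuclideanSpace ℝ (Fin d) → Matrix (Fin m) (Fin m) ℂ}
    (hg : ContDiff ℝ (⊤ : ℕ∞) g) : ContDiff ℝ (⊤ : ℕ∞) (nab B μ g) := by
  have h1 : ContDiff ℝ (⊤ : ℕ∞) (pd μ g) :=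
    (hg.fderiv_right (m := (⊤ : ℕ∞)) (by simp)).clm_apply contDiff_const
  exact h1.add ((contDiff_matrix_mul (hB μ) hg).sub (contDiff_matrix_mul hg (hB μ)))

lemma contDiff_nabL (hB : ∀ μ, ContDiff ℝ (⊤ : ℕ∞) (B μ))
    {g : EuclideanSpace ℝ (Fin d) → Matrix (Fin m) (Fin m) ℂ}
    (hg : ContDiff ℝ (⊤ : ℕ∞) g) : ∀ l, ContDiff ℝ (⊤ : ℕ∞) (nabL B l g)
  | [] => hg
  | μ :: l => contDiff_nab hB μ (contDiff_nabL hB hg l)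

/-- The covariant derivative in the direction `u`, that is `u^μ ∇_μ`. -/
noncomputable def dirNab (B : Fin d → EuclideanSpace ℝ (Fin d) → Matrix (Fin m) (Fin m) ℂ)
    (u : EuclideanSpace ℝ (Fin d)) (g : EuclideanSpace ℝ (Fin d) → Matrix (Fin m) (Fin m) ℂ) :
    EuclideanSpace ℝ (Fin d) → Matrix (Fin m) (Fin m) ℂ :=
  fun x => ∑ μ, u μ • nab B μ g x

lemma contDiff_dirNab (hB : ∀ μ, ContDiff ℝ (⊤ : ℕ∞) (B μ)) (u : EuclideanSpace ℝ (Fin d))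
    {g : EuclideanSpace ℝ (Fin d) → Matrix (Fin m) (Fin m) ℂ}
    (hg : ContDiff ℝ (⊤ : ℕ∞) g) : ContDiff ℝ (⊤ : ℕ∞) (dirNab B u g) :=
  ContDiff.sum fun μ _ => (contDiff_nab hB μ hg).const_smul (u μ)

/-- Linearity of `∇_μ` over finite sums of smooth functions. -/
lemma nab_sum (μ : Fin d) {ι : Type*} (s : Finset ι) (c : ι → ℝ)
    (g : ι → EuclideanSpace ℝ (Fin d) → Matrix (Fin m) (Fin m) ℂ)
    (hg : ∀ i, ContDiff ℝ (⊤ : ℕ∞) (g i)) (x : EuclideanSpace ℝ (Fin d)) :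
    nab B μ (fun x => ∑ i ∈ s, c i • g i x) x = ∑ i ∈ s, c i • nab B μ (g i) x := by
  have hd : ∀ i, DifferentiableAt ℝ (g i) x := fun i => (hg i).differentiable (by simp) x
  have h : HasFDerivAt (fun x => ∑ i ∈ s, c i • g i x) (∑ i ∈ s, c i • fderiv ℝ (g i) x) x :=
    HasFDerivAt.fun_sum fun i _ => ((hd i).hasFDerivAt.const_smul (c i))
  simp only [nab, pd, h.fderiv, smul_add, smul_sub, Finset.sum_add_distrib,
    Finset.sum_sub_distrib, Finset.mul_sum, Finset.sum_mul, mul_smul_comm, smul_mul_assoc]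
  simp

/-- Expanding `(u^μ ∇_μ)^n f` gives the sum over multi-indices; the `u^μ` are constants and pass
through every `∇_ν`. -/
lemma iterate_dirNab (hB : ∀ μ, ContDiff ℝ (⊤ : ℕ∞) (B μ)) (u : EuclideanSpace ℝ (Fin d))
    {f : EuclideanSpace ℝ (Fin d) → Matrix (Fin m) (Fin m) ℂ}
    (hf : ContDiff ℝ (⊤ : ℕ∞) f) (n : ℕ) :
    (dirNab B u)^[n] f = fun x => ∑ μs : Fin n → Fin d,
          (∏ i, u (μs i)) • nabL B (List.ofFn μs) f x := by
  induction n with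
  | zero => simp [nabL]
  | succ n ih =>
    funext x
    rw [Function.iterate_succ_apply', ih, dirNab,
      ← (Fin.consEquiv fun _ : Fin (n + 1) => Fin d).sum_comp, Fintype.sum_prod_type]
    refine Finset.sum_congr rfl fun μ _ => ?_
    rw [nab_sum μ _ _ _ fun μs => contDiff_nabL hB hf _, Finset.smul_sum]
    refine Finset.sum_congr rfl fun μs _ => ?_
    simp [Fin.consEquiv, Fin.prod_univ_succ, List.ofFn_succ, nabL, smul_smul]

/-- The chain rule along the line `t ↦ y + tu`: the ordinary derivative `u^μ ∂_μ g` is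
`u^μ ∇_μ g - [u^μ B_μ, g]`. -/
lemma hasDerivAt_line (y u : EuclideanSpace ℝ (Fin d))
    {g : EuclideanSpace ℝ (Fin d) → Matrix (Fin m) (Fin m) ℂ}
    (hg : ContDiff ℝ (⊤ : ℕ∞) g) (t : ℝ) :
    HasDerivAt (fun t : ℝ => g (y + t • u))
      (dirNab B u g (y + t • u) - ((∑ μ, u μ • B μ (y + t • u)) * g (y + t • u)
        - g (y + t • u) * ∑ μ, u μ • B μ (y + t • u))) t := by
  have h1 : HasDerivAt (fun t : ℝ => y + t • u) u t := by
    simpa using ((hasDerivAt_id t).smul_const u).const_add y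
  have h2 := ((hg.differentiable (by simp) (y + t • u)).hasFDerivAt).comp_hasDerivAt t h1
  refine h2.congr_deriv ?_
  have hu : u = ∑ μ, u μ • EuclideanSpace.single μ (1:ℝ) := by
    ext i; simp [Pi.single_apply]
  have hfu : fderiv ℝ g (y + t • u) u
      = ∑ μ, u μ • fderiv ℝ g (y + t • u) (EuclideanSpace.single μ (1:ℝ)) := by
    conv_lhs => rw [hu]
    simp only [map_sum, map_smul]
    simp [← hu]
  refine hfu.trans ?_
  simp only [dirNab, nab, pd, smul_add, smul_sub, Finset.sum_add_distrib,
    Finset.sum_sub_distrib, Finset.mul_sum, Finset.sum_mul, mul_smul_comm, smul_mul_assoc]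
  abel
end cov

theorem covariant_taylor_expansion
    (d m : ℕ) (hd : 0 < d) (hm : 0 < m)
    (B : Fin d → EuclideanSpace ℝ (Fin d) → Matrix (Fin m) (Fin m) ℂ)
    (hB : ∀ μ, ContDiff ℝ (⊤ : ℕ∞) (B μ))
    (P : EuclideanSpace ℝ (Fin d) → EuclideanSpace ℝ (Fin d) → ℝ →
      Matrix (Fin m) (Fin m) ℂ)
    (hP0 : ∀ x y, P x y 0 = 1)
    (hP : ∀ x y, ∀ s ∈ Set.Icc (0:ℝ) 1, HasDerivWithinAt (P x y)
      (-(∑ μ, (x μ - y μ) • B μ (y + s • (x - y))) * P x y s) (Set.Icc (0:ℝ) 1) s)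
    (Φ : EuclideanSpace ℝ (Fin d) → EuclideanSpace ℝ (Fin d) →
      Matrix (Fin m) (Fin m) ℂ)
    (hΦ : ∀ x y, Φ x y = P x y 1)
    (f : EuclideanSpace ℝ (Fin d) → Matrix (Fin m) (Fin m) ℂ)
    (hf : ContDiff ℝ (⊤ : ℕ∞) f)
    (y u : EuclideanSpace ℝ (Fin d)) (n : ℕ) :
    iteratedDeriv n
        (fun t : ℝ => Φ y (y + t • u) * f (y + t • u) * Φ (y + t • u) y) 0
      = ∑ μs : Fin n → Fin d,
          (∏ i, u (μs i)) • nabL B (List.ofFn μs) f y := by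
  -- The connection along the line, contracted with its direction.
  set A : ℝ → Matrix (Fin m) (Fin m) ℂ := fun t => ∑ μ, u μ • B μ (y + t • u) with hAdef
  have hA : Continuous A := continuous_finsetSum _ fun μ _ =>
    ((hB μ).continuous.comp (by fun_prop : Continuous fun t : ℝ => y + t • u)).const_smul (u μ)
  have hT : ∀ a b : ℝ, ∀ s ∈ Set.Icc (0:ℝ) 1, HasDerivWithinAt (P (y + b • u) (y + a • u))
      ((-((b - a) • A (a + s * (b - a)))) * P (y + b • u) (y + a • u) s)
      (Set.Icc (0:ℝ) 1) s := by
    intro a b s hs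
    have e : y + a • u + s • (y + b • u - (y + a • u)) = y + (a + s * (b - a)) • u := by
      module
    convert hP (y + b • u) (y + a • u) s hs using 3
    rw [e, hAdef, Finset.smul_sum]
    refine Finset.sum_congr rfl fun μ _ => ?_
    rw [smul_smul]
    congr 1
    simp
    ring
  obtain ⟨hW, hVW, hyy⟩ : (∀ t, HasDerivAt (fun t : ℝ => Φ (y + t • u) y)
      (-A t * Φ (y + t • u) y) t) ∧
      (∀ t : ℝ, Φ y (y + t • u) * Φ (y + t • u) y = 1) ∧ Φ y y = 1 := by
    let _ : NormedRing (Matrix (Fin m) (Fin m) ℂ) := Matrix.linftyOpNormedRing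
    let _ : NormedAlgebra ℝ (Matrix (Fin m) (Fin m) ℂ) := Matrix.linftyOpNormedAlgebra
    have h := line_transport (A := A) hA
      (T := fun a b => P (y + b • u) (y + a • u)) (fun _ _ => hP0 _ _) hT
    simp only [zero_smul, add_zero, ← hΦ] at h
    exact ⟨fun t => (h t).1, fun t => (h t).2.1, (h 0).2.2⟩
  have hV : ∀ t, HasDerivAt (fun t : ℝ => Φ y (y + t • u)) (Φ y (y + t • u) * A t) t := by
    intro t
    let _ : NormedRing (Matrix (Fin m) (Fin m) ℂ) := Matrix.linftyOpNormedRing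
    let _ : NormedAlgebra ℝ (Matrix (Fin m) (Fin m) ℂ) := Matrix.linftyOpNormedAlgebra
    have hc : @CompleteSpace (Matrix (Fin m) (Fin m) ℂ)
      Matrix.linftyOpNormedRing.toMetricSpace.toPseudoMetricSpace.toUniformSpace :=
        inferInstanceAs (CompleteSpace (Fin m → Fin m → ℂ))
    have h := hasDerivAt_left_inverse (hW t) hVW
    refine HasDerivAt.congr_deriv h ?_
    rw [neg_mul, mul_neg, neg_mul, neg_neg, mul_assoc, mul_assoc,
      mul_eq_one_comm.1 (hVW t), mul_one]
  -- The `A`-terms from the two transports cancel the commutator in the derivative of `g`.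
  have hstep : ∀ g : EuclideanSpace ℝ (Fin d) → Matrix (Fin m) (Fin m) ℂ,
      ContDiff ℝ (⊤ : ℕ∞) g → ∀ t : ℝ,
      HasDerivAt (fun t : ℝ => Φ y (y + t • u) * g (y + t • u) * Φ (y + t • u) y)
        (Φ y (y + t • u) * dirNab B u g (y + t • u) * Φ (y + t • u) y) t := by
    intro g hg t
    refine (hasDerivAt_matrix_mul
      (hasDerivAt_matrix_mul (hV t) (hasDerivAt_line (B := B) y u hg t)) (hW t)).congr_deriv ?_
    rw [hAdef]
    noncomm_ring
  have hiter : ∀ n : ℕ, ContDiff ℝ (⊤ : ℕ∞) ((dirNab B u)^[n] f) ∧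
      iteratedDeriv n (fun t : ℝ => Φ y (y + t • u) * f (y + t • u) * Φ (y + t • u) y)
        = fun t : ℝ => Φ y (y + t • u) * (dirNab B u)^[n] f (y + t • u) * Φ (y + t • u) y := by
    intro n
    induction n with
    | zero => exact ⟨hf, iteratedDeriv_zero⟩
    | succ n ih =>
      rw [Function.iterate_succ_apply', iteratedDeriv_succ, ih.2]
      exact ⟨contDiff_dirNab hB u ih.1, funext fun t => (hstep _ ih.1 t).deriv⟩
  rw [(hiter n).2, iterate_dirNab hB u hf n]
  simp [hyy]
end

section
/- For all x, y ∈ ℝ^d and μ ∈ {1,…,d}, the gauge connection can be reconstructed from the path-ordered exponential: B_μ(x) = Φ(x,y) · [ (x−y)^ν ∂_{x^ν} ( Φ(y,x) · ∂_{y^μ} Φ(x,y) ) ] · Φ(y,x) − ( ∂_{x^μ} Φ(x,y) ) · Φ(y,x). -/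
/-!
Write `Ψ (x, y) = Φ x y` and `A x v = ∑ μ, v μ • B μ x`. The formula follows by differentiating
the transport equation along rays, once it is known that `Ψ` is jointly `C²`.

*Regularity.* The hypotheses define `P x y` pointwise in `(x, y)`, so the smooth dependence of
the solution on the parameters has to be proved. In `C([0,1], R)` the equation `u' = a u`,
`u 0 = 1` reads `(1 - K_a) u = 1`, with `K_a f` the primitive of `a f`. Since
`‖K_a ^ n‖ ≤ ‖a‖ ^ n / n!`, the operator `1 - K_a` is invertible, and since inversion is smooth on
the units of a Banach algebra, `u` depends smoothly on `a ∈ C([0,1], R)` (`contDiff_solution`).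
The coefficient is a smooth function of the parameters with values in `C([0,1], R)` by
`contDiff_curry`.

*Algebra.* Uniqueness for linear differential equations gives `Φ (y + t (x - y)) y = P x y t` and
`Φ x y * Φ y x = 1`. The derivative of the former at `t = 1` is the radial equation
`DΨ(x, y)(x - y, 0) = -A x (x - y) * Φ x y`. Its derivative in `y` along `e` is
`D²Ψ(x, y)((0, e), (x - y, 0)) - DΨ(x, y)(e, 0) = A x e * Φ x y - A x (x - y) * DΨ(x, y)(0, e)`,
and differentiating `Φ y x * Φ x y = 1` in `x` along `x - y` gives
`DΨ(y, x)(0, x - y) = Φ y x * A x (x - y)`. By the symmetry of `D²Ψ`, the terms in `A x (x - y)`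
cancel in the derivative of `Φ y x * DΨ(x, y)(0, e)` in `x` along `x - y`, which is therefore
`Φ y x * (DΨ(x, y)(e, 0) + A x e * Φ x y)`. Multiplying by `Φ x y` on the left and `Φ y x` on the
right isolates `A x e` (`IsTransport.connection_eq`).
-/

namespace WilsonLine

open Set Filter Topology
open scoped ContDiff

/-! ### Smooth families of continuous functions -/

/-- A `C^n` function on `E × ℝ`, curried, is a `C^n` function from `E` to `C([0,1], F)`. The
derivative is the curried partial derivative in the first variable, to which the induction
hypothesis applies. -/
theorem contDiff_curry {E : Type} [NormedAddCommGroup E] [NormedSpace ℝ E] (n : ℕ) :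
    ∀ {F : Type} [NormedAddCommGroup F] [NormedSpace ℝ F] (f : E × ℝ → F),
      ContDiff ℝ n f → ∀ g : E → C(Icc (0 : ℝ) 1, F), (∀ p s, g p s = f (p, s)) →
      ContDiff ℝ n g := by
  have key : ∀ {F : Type} [NormedAddCommGroup F] [NormedSpace ℝ F] (f : E × ℝ → F),
      Continuous f → ∀ g : E → C(Icc (0 : ℝ) 1, F), (∀ p s, g p s = f (p, s)) →
      Continuous g := by
    intro F _ _ f hf g hg
    apply ContinuousMap.continuous_of_continuous_uncurry
    have : Function.uncurry (fun x y => g x y) = fun q : E × Icc (0:ℝ) 1 => f (q.1, q.2) := by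
      ext q; exact hg q.1 q.2
    rw [this]
    fun_prop
  induction n with
  | zero =>
    intro F _ _ f hf g hg
    rw [Nat.cast_zero, contDiff_zero] at hf ⊢
    exact key f hf g hg
  | succ n ih =>
    intro F _ _ f hf g hg
    have hf1 : Differentiable ℝ f := hf.differentiable (by simp)
    -- `f₁` is the partial derivative of `f` in its first argument
    let f₁ : E × ℝ → E →L[ℝ] F := fun q => (fderiv ℝ f q).comp (ContinuousLinearMap.inl ℝ E ℝ)
    have hf₁ : ContDiff ℝ n f₁ := by
      have : ContDiff ℝ n (fderiv ℝ f) := hf.fderiv_right (by push_cast; exact le_rfl)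
      exact this.clm_comp contDiff_const
    have hd : ∀ p s, HasFDerivAt (fun p => f (p, s)) (f₁ (p, s)) p := fun p s =>
      (hf1 (p, s)).hasFDerivAt.comp p (hasFDerivAt_prodMk_left p s)
    let G : E → C(Icc (0 : ℝ) 1, E →L[ℝ] F) := fun p =>
      ⟨fun s => f₁ (p, s), by have := hf₁.continuous; fun_prop⟩
    have hG : ∀ p s, G p s = f₁ (p, s) := fun p s => rfl
    -- a continuous family of linear maps is a linear map into continuous families
    let T : C(Icc (0 : ℝ) 1, E →L[ℝ] F) →L[ℝ] E →L[ℝ] C(Icc (0 : ℝ) 1, F) :=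
      LinearMap.mkContinuous₂
        (LinearMap.mk₂ ℝ (fun (φ : C(Icc (0 : ℝ) 1, E →L[ℝ] F)) (v : E) =>
            (⟨fun s => φ s v, by fun_prop⟩ : C(Icc (0 : ℝ) 1, F)))
          (fun _ _ _ => by ext; simp) (fun _ _ _ => by ext; simp)
          (fun _ _ _ => by ext; simp) (fun _ _ _ => by ext; simp)) 1
        (fun φ v => by
          rw [ContinuousMap.norm_le _ (by positivity)]
          intro s
          rw [one_mul]
          exact ((φ s).le_opNorm v).trans
            (mul_le_mul_of_nonneg_right (φ.norm_coe_le_norm s) (norm_nonneg v)))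
    have hT : ∀ φ v s, T φ v s = φ s v := fun _ _ _ => rfl
    have hTc : ContDiff ℝ n fun φ : C(Icc (0 : ℝ) 1, E →L[ℝ] F) => T φ := by fun_prop
    rw [Nat.cast_succ, contDiff_succ_iff_hasFDerivAt]
    refine ⟨fun p => T (G p), hTc.comp (ih f₁ hf₁ G hG), fun p => ?_⟩
    rw [hasFDerivAt_iff_isLittleO, Asymptotics.isLittleO_iff]
    intro c hc
    have hcont : Continuous G := key f₁ hf₁.continuous G hG
    -- continuity of `G` in the supremum norm bounds the remainder uniformly in `s`
    obtain ⟨δ, hδ, hball⟩ :=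
      (Metric.continuous_iff (β := C(Icc (0 : ℝ) 1, E →L[ℝ] F))).1 hcont p c hc
    filter_upwards [Metric.ball_mem_nhds p hδ] with q hq
    rw [ContinuousMap.norm_le _ (by positivity)]
    intro s
    have := (convex_ball p δ).norm_image_sub_le_of_norm_hasFDerivWithin_le'
      (f := fun p => f (p, s)) (f' := fun p => f₁ (p, s)) (φ := f₁ (p, s)) (C := c)
      (fun z _ => (hd z s).hasFDerivWithinAt)
      (fun z hz => by
        have h1 := (ContinuousMap.dist_apply_le_dist s).trans (hball z hz).le
        rwa [dist_eq_norm] at h1)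
      (Metric.mem_ball_self hδ) hq
    simpa [hg, hT, hG] using this

/-! ### The Volterra operator and dependence on parameters -/

section Volterra
variable {R : Type} [NormedRing R] [NormedAlgebra ℝ R]

/-- The primitive vanishing at `0`, as a bounded operator on `C([0,1], R)`. The integrand is
extended to `ℝ` by constants, which does not affect integrals over subintervals of `[0,1]`. -/
noncomputable def primitive : C(Icc (0 : ℝ) 1, R) →L[ℝ] C(Icc (0 : ℝ) 1, R) :=
  LinearMap.mkContinuous
    { toFun := fun f => ⟨fun t => ∫ s in (0 : ℝ)..t, IccExtend zero_le_one f s, by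
        have h : Continuous (IccExtend (zero_le_one (α := ℝ)) f) := f.continuous.Icc_extend'
        exact (intervalIntegral.continuous_primitive (fun a b => h.intervalIntegrable a b) 0).comp
          continuous_subtype_val⟩
      map_add' := fun f g => by
        ext t
        have h : ∀ f : C(Icc (0:ℝ) 1, R), Continuous (IccExtend (zero_le_one (α := ℝ)) f) :=
          fun f => f.continuous.Icc_extend'
        simpa [IccExtend] using intervalIntegral.integral_add (μ := MeasureTheory.volume)
          ((h f).intervalIntegrable 0 t) ((h g).intervalIntegrable 0 t)
      map_smul' := fun c f => by
        ext t
        simp [IccExtend] }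
    1 (fun f => by
      rw [ContinuousMap.norm_le _ (by positivity)]
      intro t
      have := intervalIntegral.norm_integral_le_of_norm_le_const (a := (0:ℝ)) (b := t)
        (f := IccExtend zero_le_one f) (C := ‖f‖) (fun s _ => f.norm_coe_le_norm _)
      refine this.trans ?_
      rw [sub_zero, abs_of_nonneg t.2.1, one_mul]
      exact mul_le_of_le_one_right (norm_nonneg f) t.2.2)

theorem primitive_apply (f : C(Icc (0 : ℝ) 1, R)) (t : Icc (0 : ℝ) 1) :
    primitive f t = ∫ s in (0 : ℝ)..t, IccExtend zero_le_one f s := rfl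

/-- The Volterra operator `f ↦ (t ↦ ∫ s in 0..t, a s * f s)`, which depends linearly and
continuously on the coefficient `a`. -/
noncomputable def volterra :
    C(Icc (0 : ℝ) 1, R) →L[ℝ] C(Icc (0 : ℝ) 1, R) →L[ℝ] C(Icc (0 : ℝ) 1, R) :=
  (ContinuousLinearMap.compL ℝ _ _ _ primitive).comp (ContinuousLinearMap.mul ℝ _)

theorem volterra_apply (a f : C(Icc (0 : ℝ) 1, R)) : volterra a f = primitive (a * f) := rfl

theorem norm_volterra_pow_le (a f : C(Icc (0 : ℝ) 1, R)) (n : ℕ) (t : Icc (0 : ℝ) 1) :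
    ‖(volterra a ^ n) f t‖ ≤ ‖a‖ ^ n * ‖f‖ * ((t : ℝ) ^ n / n.factorial) := by
  induction n generalizing t with
  | zero => simpa using f.norm_coe_le_norm t
  | succ n ih =>
    rw [pow_succ', mul_apply_eq_comp, volterra_apply, primitive_apply]
    have hb : ∀ᵐ s ∂MeasureTheory.volume, s ∈ Ioc (0:ℝ) t →
        ‖IccExtend zero_le_one (a * (volterra a ^ n) f) s‖ ≤
        ‖a‖ ^ (n + 1) * ‖f‖ * (s ^ n / n.factorial) := by
      refine .of_forall fun s hs => ?_
      have hs' : s ∈ Icc (0:ℝ) 1 := ⟨hs.1.le, hs.2.trans t.2.2⟩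
      rw [IccExtend_of_mem _ _ hs']
      calc _ ≤ ‖a ⟨s, hs'⟩‖ * ‖(volterra a ^ n) f ⟨s, hs'⟩‖ := norm_mul_le _ _
        _ ≤ ‖a‖ * (‖a‖ ^ n * ‖f‖ * (s ^ n / n.factorial)) :=
          mul_le_mul (a.norm_coe_le_norm _) (ih ⟨s, hs'⟩) (norm_nonneg _) (norm_nonneg _)
        _ = _ := by ring
    refine (intervalIntegral.norm_integral_le_of_norm_le t.2.1 hb
      (Continuous.intervalIntegrable (by fun_prop) _ _)).trans_eq ?_
    rw [intervalIntegral.integral_const_mul, intervalIntegral.integral_div, integral_pow,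
      Nat.factorial_succ]
    push_cast
    field_simp
    simp

theorem isUnit_one_sub_of_pow {A : Type*} [Ring A] (x : A) (n : ℕ) (hu : IsUnit (1 - x ^ n)) :
    IsUnit (1 - x) := by
  have hcomm : Commute (1 - x) (∑ i ∈ Finset.range n, x ^ i) :=
    (Commute.one_left _).sub_left (Commute.sum_right _ _ _ fun i _ => Commute.self_pow _ i)
  rw [← mul_neg_geom_sum, hcomm.isUnit_mul_iff] at hu
  exact hu.1

/-- Some power of the Volterra operator has norm less than `1`, because `‖a‖ ^ n / n!` tends
to `0`. -/
theorem isUnit_one_sub_volterra [CompleteSpace R]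
    (a : C(Icc (0 : ℝ) 1, R)) : IsUnit (1 - volterra a) := by
  have hlim := FloorSemiring.tendsto_pow_div_factorial_atTop ‖a‖
  obtain ⟨n, hn⟩ := (hlim.eventually (gt_mem_nhds one_half_pos)).exists
  have hnorm : ‖volterra a ^ n‖ < 1 := by
    refine lt_of_le_of_lt (ContinuousLinearMap.opNorm_le_bound _ one_half_pos.le fun f => ?_)
      one_half_lt_one
    rw [ContinuousMap.norm_le _ (by positivity)]
    intro t
    refine (norm_volterra_pow_le a f n t).trans ?_
    have h1 : (t : ℝ) ^ n ≤ 1 := pow_le_one₀ t.2.1 t.2.2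
    calc ‖a‖ ^ n * ‖f‖ * ((t : ℝ) ^ n / n.factorial)
        = ‖a‖ ^ n / n.factorial * ‖f‖ * (t : ℝ) ^ n := by ring
      _ ≤ ‖a‖ ^ n / n.factorial * ‖f‖ := mul_le_of_le_one_right (by positivity) h1
      _ ≤ 1 / 2 * ‖f‖ := mul_le_mul_of_nonneg_right hn.le (norm_nonneg f)
  have hu : IsUnit (1 - volterra a ^ n) :=
    isUnit_one_sub_of_norm_lt_one (R := C(Icc (0 : ℝ) 1, R) →L[ℝ] C(Icc (0 : ℝ) 1, R)) hnorm
  exact isUnit_one_sub_of_pow (A := C(Icc (0 : ℝ) 1, R) →L[ℝ] C(Icc (0 : ℝ) 1, R)) _ n hu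

/-- The time-one value of the solution of `u' = a(p, ·) u`, `u 0 = 1`, is as smooth in the
parameter `p` as `a` is in `(p, s)`. -/
theorem contDiff_solution [CompleteSpace R] {E : Type} [NormedAddCommGroup E]
    [NormedSpace ℝ E] (n : ℕ) (a : E × ℝ → R) (ha : ContDiff ℝ n a)
    (u : E → ℝ → R) (hu0 : ∀ p, u p 0 = 1)
    (hu : ∀ p, ∀ s ∈ Icc (0 : ℝ) 1, HasDerivWithinAt (u p) (a (p, s) * u p s) (Icc 0 1) s) :
    ContDiff ℝ n (fun p => u p 1) := by
  have hac := ha.continuous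
  let A : E → C(Icc (0 : ℝ) 1, R) := fun p => ⟨fun s => a (p, s), by fun_prop⟩
  have hA : ContDiff ℝ n A := contDiff_curry n a ha A fun _ _ => rfl
  have huc : ∀ p, ContinuousOn (u p) (Icc 0 1) := fun p s hs => (hu p s hs).continuousWithinAt
  let U : E → C(Icc (0 : ℝ) 1, R) := fun p => ⟨fun s => u p s, (huc p).domRestrict⟩
  have hU : ∀ p, (1 - volterra (A p)) (U p) = 1 := by
    intro p
    ext t
    have hc : ContinuousOn (fun s => a (p, s) * u p s) (Icc 0 t) :=
      (by fun_prop : Continuous fun s => a (p, s)).continuousOn.mul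
        ((huc p).mono (Icc_subset_Icc_right t.2.2))
    have hint := intervalIntegral.integral_eq_sub_of_hasDerivAt_of_le (a := (0:ℝ)) (b := t)
      (f := u p) (f' := fun s => a (p, s) * u p s) t.2.1
      ((huc p).mono (Icc_subset_Icc_right t.2.2))
      (fun s hs => (hu p s ⟨hs.1.le, hs.2.le.trans t.2.2⟩).hasDerivAt
        (Icc_mem_nhds hs.1 (hs.2.trans_le t.2.2)))
      (hc.intervalIntegrable_of_Icc t.2.1)
    have heq : volterra (A p) (U p) t = ∫ s in (0:ℝ)..t, a (p, s) * u p s := by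
      rw [volterra_apply, primitive_apply]
      refine intervalIntegral.integral_congr fun s hs => ?_
      rw [uIcc_of_le t.2.1] at hs
      have hs' : s ∈ Icc (0:ℝ) 1 := ⟨hs.1, hs.2.trans t.2.2⟩
      exact IccExtend_of_mem _ _ hs'
    change u p t - volterra (A p) (U p) t = 1
    rw [heq, hint, hu0]
    abel
  have hsol : ∀ p, U p = Ring.inverse (1 - volterra (A p)) 1 := by
    intro p
    rw [← hU p, ← mul_apply_eq_comp,
      Ring.inverse_mul_cancel _ (isUnit_one_sub_volterra (A p)), one_apply_eq_self]
  have hUs : ContDiff ℝ n U := by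
    rw [funext hsol, contDiff_iff_contDiffAt]
    intro p
    obtain ⟨w, hw⟩ := isUnit_one_sub_volterra (A p)
    have h1 : ContDiffAt ℝ n Ring.inverse (1 - volterra (A p)) := by
      rw [← hw]
      exact contDiffAt_ringInverse ℝ (R := C(Icc (0 : ℝ) 1, R) →L[ℝ] C(Icc (0 : ℝ) 1, R)) w
    have hV : ContDiff ℝ n fun b : C(Icc (0 : ℝ) 1, R) => volterra b := by fun_prop
    have h2 : ContDiff ℝ n fun p => 1 - volterra (A p) :=
      contDiff_const.sub (hV.comp hA)
    exact (h1.comp p h2.contDiffAt).clm_apply contDiffAt_const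
  exact (ContinuousMap.evalCLM ℝ (⟨1, by simp⟩ : Icc (0 : ℝ) 1)).contDiff.comp hUs

end Volterra


/-! ### Parallel transport along segments -/

section Transport
variable {R : Type} [NormedRing R] [NormedAlgebra ℝ R]

theorem solution_unique {a u v : ℝ → R} (ha : ContinuousOn a (Icc 0 1))
    (hu : ∀ s ∈ Icc (0 : ℝ) 1, HasDerivWithinAt u (a s * u s) (Icc 0 1) s)
    (hv : ∀ s ∈ Icc (0 : ℝ) 1, HasDerivWithinAt v (a s * v s) (Icc 0 1) s)
    (h0 : u 0 = v 0) : u 1 = v 1 := by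
  obtain ⟨C, hC⟩ := isCompact_Icc.exists_bound_of_continuousOn ha
  have hlip : ∀ t ∈ Ico (0 : ℝ) 1,
      LipschitzOnWith C.toNNReal (fun w => a t * w) univ := by
    intro t ht
    refine LipschitzOnWith.of_dist_le_mul fun w _ z _ => ?_
    rw [dist_eq_norm, dist_eq_norm, ← mul_sub]
    refine (norm_mul_le _ _).trans (mul_le_mul_of_nonneg_right ?_ (norm_nonneg _))
    exact (hC t ⟨ht.1, ht.2.le⟩).trans (Real.le_coe_toNNReal C)
  have hIci : ∀ w : ℝ → R,
      (∀ s ∈ Icc (0 : ℝ) 1, HasDerivWithinAt w (a s * w s) (Icc 0 1) s) →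
      ∀ t ∈ Ico (0 : ℝ) 1, HasDerivWithinAt w (a t * w t) (Ici t) t := fun w hw t ht =>
    (hw t ⟨ht.1, ht.2.le⟩).mono_of_mem_nhdsWithin (Icc_mem_nhdsGE_of_mem ht)
  exact ODE_solution_unique_of_mem_Icc_right (v := fun t w => a t * w) (s := fun _ => univ) hlip
    (fun s hs => (hu s hs).continuousWithinAt) (hIci u hu) (fun _ _ => mem_univ _)
    (fun s hs => (hv s hs).continuousWithinAt) (hIci v hv) (fun _ _ => mem_univ _) h0
    (right_mem_Icc.2 zero_le_one)

variable {E : Type} [NormedAddCommGroup E] [NormedSpace ℝ E]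

/-- `P x y` solves the parallel transport equation of the connection `A` along the segment from
`y` to `x`, with `P x y 0 = 1`. The connection is a one-form with values in `R`, so the
contraction `v^μ B_μ(z)` is `A z v`. -/
structure IsTransport (A : E → E →L[ℝ] R) (P : E → E → ℝ → R) : Prop where
  zero : ∀ x y, P x y 0 = 1
  deriv : ∀ x y, ∀ s ∈ Icc (0 : ℝ) 1, HasDerivWithinAt (P x y)
    (-(A (y + s • (x - y)) (x - y)) * P x y s) (Icc 0 1) s

variable {A : E → E →L[ℝ] R} {P : E → E → ℝ → R}

/-- Transport along an initial piece of a segment: the equation for the endpoint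
`y + t • (x - y)` is the equation for `x` with time rescaled by `t`. -/
theorem IsTransport.scale (h : IsTransport A P) (hA : Continuous A) (x y : E) {t : ℝ}
    (ht : t ∈ Icc (0 : ℝ) 1) : P (y + t • (x - y)) y 1 = P x y t := by
  have hmaps : MapsTo (fun s : ℝ => t * s) (Icc 0 1) (Icc 0 1) := fun s hs =>
    ⟨mul_nonneg ht.1 hs.1, mul_le_one₀ ht.2 hs.1 hs.2⟩
  have := solution_unique (a := fun s => -(A (y + (t * s) • (x - y)) (t • (x - y))))
    (u := P (y + t • (x - y)) y) (v := fun s => P x y (t * s)) (by fun_prop)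
    (fun s hs => by
      convert h.deriv (y + t • (x - y)) y s hs using 6
      · rw [add_sub_cancel_left, smul_smul, mul_comm]
      · rw [add_sub_cancel_left])
    (fun s hs => by
      have h1 := (h.deriv x y (t * s) (hmaps hs)).scomp s
        ((hasDerivAt_id s).const_mul t).hasDerivWithinAt hmaps
      convert! h1 using 1
      simp only [mul_one, map_smul, smul_mul_assoc, neg_mul, smul_neg])
    (by simp [h.zero])
  simpa using this

/-- `s ↦ P x y s * P y x 1` and the time reversal of `P y x` solve the same equation with the
same initial value, and the latter takes the value `1` at `s = 1`. -/
theorem IsTransport.mul_swap (h : IsTransport A P) (hA : Continuous A) (x y : E) :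
    P x y 1 * P y x 1 = 1 := by
  have hmaps : MapsTo (fun s : ℝ => 1 - s) (Icc 0 1) (Icc 0 1) := fun s hs =>
    ⟨by linarith [hs.2], by linarith [hs.1]⟩
  have := solution_unique (a := fun s => -(A (y + s • (x - y)) (x - y)))
    (u := fun s => P x y s * P y x 1) (v := fun s => P y x (1 - s)) (by fun_prop)
    (fun s hs => by
      rw [← mul_assoc]
      exact (h.deriv x y s hs).mul_const _)
    (fun s hs => by
      have h1 := (h.deriv y x (1 - s) (hmaps hs)).scomp s
        ((hasDerivAt_id s).const_sub 1).hasDerivWithinAt hmaps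
      convert! h1 using 1
      have e1 : x + (1 - s) • (y - x) = y + s • (x - y) := by module
      rw [e1, ← neg_sub x y, map_neg]
      simp only [neg_neg, neg_mul, neg_smul, one_smul])
    (by simp [h.zero])
  simpa [h.zero] using this

theorem IsTransport.contDiff [CompleteSpace R] (h : IsTransport A P) (hA : ContDiff ℝ 2 A) :
    ContDiff ℝ 2 fun p : E × E => P p.1 p.2 1 :=
  contDiff_solution 2 (fun q : (E × E) × ℝ =>
      -(A (q.1.2 + q.2 • (q.1.1 - q.1.2)) (q.1.1 - q.1.2)))
    (by
      refine ContDiff.neg (ContDiff.clm_apply (hA.comp ?_) ?_) <;> fun_prop)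
    (fun p => P p.1 p.2) (fun p => h.zero _ _) (fun p s hs => h.deriv _ _ s hs)

/-- The radial equation, obtained from the transport equation at time `1` through
`IsTransport.scale`. -/
theorem IsTransport.fderiv_radial [CompleteSpace R] (h : IsTransport A P) (hA : ContDiff ℝ 2 A)
    (x y : E) :
    fderiv ℝ (fun p : E × E => P p.1 p.2 1) (x, y) (x - y, 0) = -(A x (x - y)) * P x y 1 := by
  have hΦ : Differentiable ℝ fun p : E × E => P p.1 p.2 1 :=
    (h.contDiff hA).differentiable (by simp)
  have hline : HasDerivAt (fun t : ℝ => (y + t • (x - y), y)) (x - y, (0 : E)) 1 := by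
    have h1 : HasDerivAt (fun t : ℝ => y + t • (x - y)) (x - y) 1 := by
      simpa using ((hasDerivAt_id (1 : ℝ)).smul_const (x - y)).const_add y
    exact h1.prodMk (hasDerivAt_const 1 y)
  have hpt : (y + (1 : ℝ) • (x - y), y) = (x, y) := by simp
  have h1 : HasDerivWithinAt (P x y)
      (fderiv ℝ (fun p : E × E => P p.1 p.2 1) (x, y) (x - y, 0)) (Icc 0 1) 1 := by
    have h2 := (hpt ▸ (hΦ (x, y)).hasFDerivAt : HasFDerivAt (fun p : E × E => P p.1 p.2 1)
      (fderiv ℝ (fun p : E × E => P p.1 p.2 1) (x, y)) (y + (1 : ℝ) • (x - y), y)).comp_hasDerivAt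
      1 hline
    refine h2.hasDerivWithinAt.congr_of_mem (fun t ht => ?_) (right_mem_Icc.2 zero_le_one)
    exact (h.scale hA.continuous x y ht).symm
  have h2 := h.deriv x y 1 (right_mem_Icc.2 zero_le_one)
  have := (uniqueDiffOn_Icc_zero_one 1 (right_mem_Icc.2 zero_le_one)).eq_deriv _ h1 h2
  simpa using this

/-- Reconstruction of a connection from its transports along segments, in coordinate-free form
and with values in any Banach algebra. -/
theorem IsTransport.connection_eq [CompleteSpace R] (h : IsTransport A P) (hA : ContDiff ℝ 2 A)
    {Φ : E → E → R} (hΦ : ∀ x y, Φ x y = P x y 1) (x y e : E) :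
    A x e = Φ x y * fderiv ℝ (fun x' => Φ y x' * fderiv ℝ (fun y' => Φ x' y') y e) x (x - y) *
      Φ y x - fderiv ℝ (fun x' => Φ x' y) x e * Φ y x := by
  let Ψ : E × E → R := fun p => Φ p.1 p.2
  have hPΨ : (fun p : E × E => P p.1 p.2 1) = Ψ := by ext p; exact (hΦ _ _).symm
  have hΨ : ContDiff ℝ 2 Ψ := hPΨ ▸ h.contDiff hA
  have hΨd : Differentiable ℝ Ψ := hΨ.differentiable (by simp)
  have hD : Differentiable ℝ (fderiv ℝ Ψ) :=
    (hΨ.fderiv_right (m := 1) (by norm_num)).differentiable (by simp)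
  have hrad : ∀ y', fderiv ℝ Ψ (x, y') (x - y', 0) = -(A x (x - y')) * Φ x y' := fun y' => by
    rw [← hPΨ, hΦ]; exact h.fderiv_radial hA x y'
  have hleft : ∀ x' y', HasFDerivAt (fun z => Φ z y')
      ((fderiv ℝ Ψ (x', y')).comp (ContinuousLinearMap.inl ℝ E E)) x' := fun x' y' =>
    HasFDerivAt.comp (g := Ψ) (f := fun z => (z, y')) x' (hΨd (x', y')).hasFDerivAt
      (hasFDerivAt_prodMk_left x' y')
  have hright : ∀ x' y', HasFDerivAt (fun z => Φ x' z)
      ((fderiv ℝ Ψ (x', y')).comp (ContinuousLinearMap.inr ℝ E E)) y' := fun x' y' =>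
    HasFDerivAt.comp (g := Ψ) (f := fun z => (x', z)) y' (hΨd (x', y')).hasFDerivAt
      (hasFDerivAt_prodMk_right x' y')
  have hinv : ∀ x y, Φ x y * Φ y x = 1 := fun x y => by
    rw [hΦ, hΦ]; exact h.mul_swap hA.continuous x y
  -- the radial equation, differentiated in the initial point in the direction `e`
  have hmixed : fderiv ℝ (fderiv ℝ Ψ) (x, y) (0, e) (x - y, 0) - fderiv ℝ Ψ (x, y) (e, 0) =
      A x e * Φ x y - A x (x - y) * fderiv ℝ Ψ (x, y) (0, e) := by
    have h1 : HasFDerivAt (fun y' => fderiv ℝ Ψ (x, y'))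
        ((fderiv ℝ (fderiv ℝ Ψ) (x, y)).comp (ContinuousLinearMap.inr ℝ E E)) y :=
      (hD (x, y)).hasFDerivAt.comp y (hasFDerivAt_prodMk_right x y)
    have h2 : HasFDerivAt (fun y' : E => (x - y', (0 : E)))
        ((-ContinuousLinearMap.id ℝ E).prod 0) y :=
      ((hasFDerivAt_id y).const_sub x).prodMk (hasFDerivAt_const 0 y)
    have h3 : HasFDerivAt (fun y' : E => -(A x (x - y')))
        (-((A x).comp (-ContinuousLinearMap.id ℝ E))) y :=
      ((A x).hasFDerivAt.comp y ((hasFDerivAt_id y).const_sub x)).neg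
    have h4 := h1.clm_apply h2
    have h5 := (h3.mul' (hright x y)).congr_of_eventuallyEq (.of_forall hrad)
    have h6 := DFunLike.congr_fun (h4.unique h5) e
    have hneg : fderiv ℝ Ψ (x, y) (-e, 0) = -fderiv ℝ Ψ (x, y) (e, 0) := by
      rw [← map_neg, Prod.neg_mk, neg_zero]
    simp [-map_sub, hneg] at h6
    exact (sub_eq_neg_add _ _).trans (h6.trans (sub_eq_neg_add _ _).symm)
  have hsymm : fderiv ℝ (fderiv ℝ Ψ) (x, y) (x - y, 0) (0, e) =
      fderiv ℝ (fderiv ℝ Ψ) (x, y) (0, e) (x - y, 0) :=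
    (hΨ.contDiffAt.isSymmSndFDerivAt (by simp)).eq _ _
  -- the derivative of the inverse transport along the segment
  have hback : fderiv ℝ Ψ (y, x) (0, x - y) = Φ y x * A x (x - y) := by
    have h1 := (hright y x).mul' (hleft x y)
    rw [show ((fun z => Φ y z) * fun z => Φ z y) = fun _ => 1 from funext fun z => hinv y z] at h1
    have h6 := DFunLike.congr_fun (h1.unique (hasFDerivAt_const 1 x)) (x - y)
    simp [hrad, -map_sub] at h6
    rw [neg_add_eq_zero, ← mul_assoc] at h6
    have h7 := congrArg (· * Φ y x) h6
    simpa [-map_sub, mul_assoc, hinv] using h7.symm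
  have houter : fderiv ℝ (fun x' => Φ y x' * fderiv ℝ (fun y' => Φ x' y') y e) x (x - y) =
      Φ y x * (fderiv ℝ Ψ (x, y) (e, 0) + A x e * Φ x y) := by
    have h1 : HasFDerivAt (fun x' => fderiv ℝ Ψ (x', y))
        ((fderiv ℝ (fderiv ℝ Ψ) (x, y)).comp (ContinuousLinearMap.inl ℝ E E)) x :=
      (hD (x, y)).hasFDerivAt.comp x (hasFDerivAt_prodMk_left x y)
    have h2 := (hright y x).mul' (h1.clm_apply (hasFDerivAt_const ((0 : E), e) x))
    have h3 : (fun x' => Φ y x' * fderiv ℝ (fun y' => Φ x' y') y e) =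
        fun x' => Φ y x' * fderiv ℝ Ψ (x', y) (0, e) := by
      ext x'; rw [(hright x' y).fderiv]; simp
    rw [h3]
    refine (DFunLike.congr_fun (HasFDerivAt.fderiv h2) (x - y)).trans ?_
    simp [-map_sub]
    rw [hback, hsymm, mul_assoc, ← mul_add, sub_eq_iff_eq_add.1 hmixed]
    congr 1
    abel
  rw [houter, (hleft x y).fderiv]
  simp only [ContinuousLinearMap.comp_apply, ContinuousLinearMap.inl_apply]
  rw [← mul_assoc, hinv, one_mul, add_mul, mul_assoc (A x e), hinv, mul_one, add_sub_cancel_left]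

/-- The coordinate form of `IsTransport.connection_eq`, for `A x v = ∑ μ, v μ • B μ x`. -/
theorem coordinate_connection_eq [CompleteSpace R] {d : ℕ}
    (B : Fin d → EuclideanSpace ℝ (Fin d) → R) (hB : ∀ μ, ContDiff ℝ 2 (B μ))
    (P : EuclideanSpace ℝ (Fin d) → EuclideanSpace ℝ (Fin d) → ℝ → R)
    (hP0 : ∀ x y, P x y 0 = 1)
    (hP : ∀ x y, ∀ s ∈ Icc (0 : ℝ) 1, HasDerivWithinAt (P x y)
      (-(∑ μ, (x μ - y μ) • B μ (y + s • (x - y))) * P x y s) (Icc (0 : ℝ) 1) s)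
    (Φ : EuclideanSpace ℝ (Fin d) → EuclideanSpace ℝ (Fin d) → R)
    (hΦ : ∀ x y, Φ x y = P x y 1) (x y : EuclideanSpace ℝ (Fin d)) (μ : Fin d) :
    B μ x =
      Φ x y *
        (∑ ν, (x ν - y ν) •
          fderiv ℝ
            (fun x' => Φ y x' *
              fderiv ℝ (fun y' => Φ x' y') y (EuclideanSpace.single μ 1))
            x (EuclideanSpace.single ν 1)) *
        Φ y x
      - fderiv ℝ (fun x' => Φ x' y) x (EuclideanSpace.single μ 1) * Φ y x := by
  let A : EuclideanSpace ℝ (Fin d) → EuclideanSpace ℝ (Fin d) →L[ℝ] R :=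
    fun x => ∑ μ, (EuclideanSpace.proj (𝕜 := ℝ) μ).smulRight (B μ x)
  have hA_apply : ∀ x v, A x v = ∑ μ, v μ • B μ x := fun x v => by
    simp [A]
  have hA : ContDiff ℝ 2 A := ContDiff.sum fun μ _ => contDiff_const.smulRight (hB μ)
  have hT : IsTransport A P := ⟨hP0, fun x y s hs => by
    rw [hA_apply]; exact hP x y s hs⟩
  have hmain := hT.connection_eq hA hΦ x y (EuclideanSpace.single μ 1)
  have hxy : x - y = ∑ ν, (x ν - y ν) • EuclideanSpace.single ν (1 : ℝ) := by
    ext k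
    simp [Pi.single_apply]
  have hAμ : A x (EuclideanSpace.single μ 1) = B μ x := by
    rw [hA_apply, Finset.sum_eq_single μ] <;> simp +contextual
  rw [hAμ] at hmain
  refine hmain.trans ?_
  have hsum : ∀ L : EuclideanSpace ℝ (Fin d) →L[ℝ] R,
      L (x - y) = ∑ ν, (x ν - y ν) • L (EuclideanSpace.single ν 1) := fun L => by
    rw [hxy, map_sum]
    simp only [map_smul]
  rw [hsum]

end Transport

/-! ### Matrix-valued connections -/

section MatrixConnection
open scoped Matrix.Norms.Operator

/-- The matrix case, for the operator norm associated with the sup norm on `ℂ^m`, which makes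
matrices a Banach algebra. Smoothness is assumed entrywise so that the hypothesis does not depend
on the choice of matrix norm. -/
theorem matrix_connection_eq {d m : ℕ}
    (B : Fin d → EuclideanSpace ℝ (Fin d) → Matrix (Fin m) (Fin m) ℂ)
    (hB : ∀ μ i j, ContDiff ℝ (⊤ : ℕ∞) fun x => B μ x i j)
    (P : EuclideanSpace ℝ (Fin d) → EuclideanSpace ℝ (Fin d) → ℝ → Matrix (Fin m) (Fin m) ℂ)
    (hP0 : ∀ x y, P x y 0 = 1)
    (hP : ∀ x y, ∀ s ∈ Icc (0 : ℝ) 1, HasDerivWithinAt (P x y)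
      (-(∑ μ, (x μ - y μ) • B μ (y + s • (x - y))) * P x y s) (Icc (0 : ℝ) 1) s)
    (Φ : EuclideanSpace ℝ (Fin d) → EuclideanSpace ℝ (Fin d) → Matrix (Fin m) (Fin m) ℂ)
    (hΦ : ∀ x y, Φ x y = P x y 1) (x y : EuclideanSpace ℝ (Fin d)) (μ : Fin d) :
    B μ x =
      Φ x y *
        (∑ ν, (x ν - y ν) •
          fderiv ℝ
            (fun x' => Φ y x' *
              fderiv ℝ (fun y' => Φ x' y') y (EuclideanSpace.single μ 1))
            x (EuclideanSpace.single ν 1)) *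
        Φ y x
      - fderiv ℝ (fun x' => Φ x' y) x (EuclideanSpace.single μ 1) * Φ y x := by
  have hBs : ∀ μ, ContDiff ℝ 2 (B μ) := by
    intro μ
    have hsum : B μ = fun x => ∑ i, ∑ j,
        (Matrix.singleLinearMap ℝ (α := ℂ) i j).toContinuousLinearMap (B μ x i j) := by
      ext1 x
      exact Matrix.matrix_eq_sum_single (B μ x)
    rw [hsum]
    exact ContDiff.sum fun i _ => ContDiff.sum fun j _ =>
      (ContinuousLinearMap.contDiff _).comp (contDiff_infty.1 (hB μ i j) 2)
  exact coordinate_connection_eq B hBs P hP0 hP Φ hΦ x y μ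

end MatrixConnection
end WilsonLine


/- STATEMENT 5: reconstruction of the gauge connection from the Wilson line:
`B_μ(x) = Φ(x,y)·[(x−y)^ν ∂_{x^ν}(Φ(y,x)·∂_{y^μ}Φ(x,y))]·Φ(y,x)
          − (∂_{x^μ}Φ(x,y))·Φ(y,x)`. -/

attribute [local instance] Matrix.normedAddCommGroup Matrix.normedSpace

theorem gauge_connection_from_wilson_line
    (d m : ℕ) (hd : 0 < d) (hm : 0 < m)
    (B : Fin d → EuclideanSpace ℝ (Fin d) → Matrix (Fin m) (Fin m) ℂ)
    (hB : ∀ μ, ContDiff ℝ (⊤ : ℕ∞) (B μ))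
    (P : EuclideanSpace ℝ (Fin d) → EuclideanSpace ℝ (Fin d) → ℝ →
      Matrix (Fin m) (Fin m) ℂ)
    (hP0 : ∀ x y, P x y 0 = 1)
    (hP : ∀ x y, ∀ s ∈ Set.Icc (0:ℝ) 1, HasDerivWithinAt (P x y)
      (-(∑ μ, (x μ - y μ) • B μ (y + s • (x - y))) * P x y s) (Set.Icc (0:ℝ) 1) s)
    (Φ : EuclideanSpace ℝ (Fin d) → EuclideanSpace ℝ (Fin d) →
      Matrix (Fin m) (Fin m) ℂ)
    (hΦ : ∀ x y, Φ x y = P x y 1)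
    (x y : EuclideanSpace ℝ (Fin d)) (μ : Fin d) :
    B μ x =
      Φ x y *
        (∑ ν, (x ν - y ν) •
          fderiv ℝ
            (fun x' => Φ y x' *
              fderiv ℝ (fun y' => Φ x' y') y (EuclideanSpace.single μ 1))
            x (EuclideanSpace.single ν 1)) *
        Φ y x
      - fderiv ℝ (fun x' => Φ x' y) x (EuclideanSpace.single μ 1) * Φ y x := by
  -- the entrywise sup norm and the operator norm induce definitionally the same topology, hence
  -- the same derivatives
  exact WilsonLine.matrix_connection_eq B (fun μ i j => contDiff_pi.1 (contDiff_pi.1 (hB μ) i) j)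
    P hP0 hP Φ hΦ x y μ
end

section
/- Suppose the connection components B_μ are real-analytic on ℝ^d. Then for every y ∈ ℝ^d there exists ε > 0 such that for all x with |x−y| < ε and all μ ∈ {1,…,d}, the series f^{FS}_μ(x−y, y) = Σ_{k≥1} k((x−y)^{μ_1}⋯(x−y)^{μ_k}/(k+1)!) ∇_{μ_1}⋯∇_{μ_{k−1}} F_{μ_k μ}(y) converges absolutely and ∂_{x^μ} Φ(x,y) + B_μ(x) Φ(x,y) = Φ(x,y) · f^{FS}_μ(x−y, y). -/
/-!
Put `u = x - y`, `Ψ u = Φ (y + u) y`, and let `A x u = ∑ u^μ B_μ x` be the connection one-form.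
Two things have to be shown: `Ψ` is real-analytic near `0`, and the Taylor coefficients at `0` of
`r = Ψ⁻¹ (∂_e Ψ + A(e) Ψ)` are the terms of the Fock–Schwinger series in the direction `e`.

*Analyticity* (`exists_analytic_endpoint`). The transport equation along the ray `s ↦ y + s u` is
the Volterra equation `p + V (a_u p) = 1` in the Banach algebra of continuous paths on `[0, 1]`,
where `a_u s = A (y + s u) u`. The path `a_u` depends analytically on `u` and vanishes at `u = 0`,
and inversion in a Banach algebra is analytic, so `p` depends analytically on small `u`.

*Coefficients* (`fockSchwinger_abstract`). Transport along `s u` is a reparametrization of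
transport along `u`, so `Ψ` satisfies the Euler equation `∂_u Ψ u = -A (y + u) u Ψ u`.
Differentiating it in the direction `e` gives
`d/ds (s r (s u)) = s Ψ⁻¹ F(u, e) Ψ`, with `F` the curvature at `y + s u` and `Ψ` taken at `s u`.
Conjugation by `Ψ` turns the covariant derivative `∇_u` into `d/ds` (`iteratedDeriv_conj`), so
comparing Taylor coefficients in `s` gives
`(n + 1) n! r_n(u) = n (∇_u)^(n-1) F(u, e) (y)`, where `r_n` is the homogeneous part of
degree `n` of `r`. Hence `r_0 = 0` and `r_n(u) = n / (n + 1)! (∇_u)^(n-1) F(u, e) (y)`, and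
`∑ r_n(u)` converges absolutely to `r u` for small `u`.

This is carried out for connections valued in a Banach algebra, with the contracted indices
absorbed into `u`; `sum_foldr_covD` and `curv_eq_sum` restore them. Matrices with the entrywise
norm do not form a normed ring, so they are replaced by operators on `ℂᵐ` (`matrixEquivCLM`).
-/


/- STATEMENT 7: for real-analytic connection components, near any point `y`
the Fock–Schwinger series `f^{FS}_μ(x−y,y) = Σ_{k≥1} k((x−y)^{μ_1}⋯(x−y)^{μ_k}/(k+1)!)
∇_{μ_1}⋯∇_{μ_{k−1}} F_{μ_k μ}(y)` converges absolutely (the `k`-th term is indexed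
below by `j = k−1`) and `∂_{x^μ} Φ(x,y) + B_μ(x) Φ(x,y) = Φ(x,y)·f^{FS}_μ(x−y,y)`. -/

attribute [local instance] Matrix.normedAddCommGroup Matrix.normedSpace

/-- The `k`-th term (`k = j+1 ≥ 1`) of the series defining `f^{FS}_μ(u, y)`,
namely `k/(k+1)! · u^{μ_1}⋯u^{μ_k} ∇_{μ_1}⋯∇_{μ_{k−1}} F_{μ_k μ}(y)`. -/
noncomputable def fFSterm {d m : ℕ}
    (B : Fin d → EuclideanSpace ℝ (Fin d) → Matrix (Fin m) (Fin m) ℂ)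
    (y u : EuclideanSpace ℝ (Fin d)) (μ : Fin d) (j : ℕ) :
    Matrix (Fin m) (Fin m) ℂ :=
  (((j : ℝ) + 1) / (Nat.factorial (j + 2) : ℝ)) •
    ∑ ν : Fin (j + 1) → Fin d,
      (∏ i, u (ν i)) •
        nabL B (List.ofFn fun i : Fin j => ν i.castSucc)
          (Fstr B (ν (Fin.last j)) μ) y

/-! ### The Fock–Schwinger expansion in a Banach algebra -/

section Abstract
open Filter Topology

variable {E 𝔸 : Type*} [NormedAddCommGroup E] [NormedSpace ℝ E]
  [NormedRing 𝔸] [NormedAlgebra ℝ 𝔸] [CompleteSpace 𝔸]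

/-- The covariant derivative of `g` in the fixed direction `u`, for a connection
one-form `A` with values in a Banach algebra. -/
noncomputable def covD (A : E → E →L[ℝ] 𝔸) (u : E) (g : E → 𝔸) : E → 𝔸 :=
  fun x => fderiv ℝ g x u + (A x u * g x - g x * A x u)

/-- The curvature two-form of `A`, evaluated on the constant vector fields `u`, `e`. -/
noncomputable def curv (A : E → E →L[ℝ] 𝔸) (u e : E) : E → 𝔸 :=
  fun x => fderiv ℝ (fun z => A z e) x u - fderiv ℝ (fun z => A z u) x e
    + (A x u * A x e - A x e * A x u)

/-- The homogeneous parts of a power series are read off from its restrictions to lines. -/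
lemma factorial_smul_coeff {r : E → 𝔸} {q : FormalMultilinearSeries ℝ E 𝔸}
    (hr : HasFPowerSeriesAt r q 0) (u : E) (n : ℕ) :
    (n.factorial • q n fun _ => u) = iteratedDeriv n (fun s : ℝ => r (s • u)) 0 := by
  have h0 : HasFPowerSeriesAt r q ((ContinuousLinearMap.toSpanSingleton ℝ u) (0:ℝ)) := by
    simpa using hr
  obtain ⟨ρ, hρ⟩ := h0.compContinuousLinearMap
  have := hρ.factorial_smul (1:ℝ) n
  rw [iteratedDeriv_eq_iteratedFDeriv]
  rw [show (fun s : ℝ => r (s • u)) = r ∘ (ContinuousLinearMap.toSpanSingleton ℝ u) by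
    ext s; simp]
  rw [← this]
  simp [FormalMultilinearSeries.compContinuousLinearMap]

lemma iteratedDeriv_id_smul {f : ℝ → 𝔸} (hf : AnalyticAt ℝ f 0) (n : ℕ) :
    iteratedDeriv (n + 1) (fun s : ℝ => s • f s) 0 = ((n : ℝ) + 1) • iteratedDeriv n f 0 := by
  induction n generalizing f with
  | zero =>
    have : HasDerivAt (fun s : ℝ => s • f s) ((0:ℝ) • deriv f 0 + (1:ℝ) • f 0) 0 :=
      (hasDerivAt_id (0:ℝ)).smul hf.differentiableAt.hasDerivAt
    simp [iteratedDeriv_one, this.deriv]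
  | succ n ih =>
    have h1 : deriv (fun s : ℝ => s • f s) =ᶠ[𝓝 0] f + fun s => s • deriv f s := by
      filter_upwards [hf.eventually_analyticAt] with s hs
      have : HasDerivAt (fun s : ℝ => s • f s) (s • deriv f s + (1:ℝ) • f s) s :=
        (hasDerivAt_id s).smul hs.differentiableAt.hasDerivAt
      rw [this.deriv]; simp [add_comm]
    rw [iteratedDeriv_succ', h1.iteratedDeriv_eq, iteratedDeriv_add, ih hf.deriv,
      ← iteratedDeriv_succ']
    · push_cast; module
    · exact hf.contDiffAt
    · exact (analyticAt_id.smul hf.deriv).contDiffAt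

omit [CompleteSpace 𝔸] in
lemma analyticAt_eval {f : E → E →L[ℝ] 𝔸} {y : E} (hf : AnalyticAt ℝ f y) (w : E) :
    AnalyticAt ℝ (fun x => f x w) y :=
  ((ContinuousLinearMap.apply ℝ 𝔸 w).analyticAt _).fun_comp hf

lemma analyticAt_covD {A : E → E →L[ℝ] 𝔸} {y : E} (hA : AnalyticAt ℝ A y) (u : E)
    {g : E → 𝔸} (hg : AnalyticAt ℝ g y) : AnalyticAt ℝ (covD A u g) y := by
  have hAu : AnalyticAt ℝ (fun x => A x u) y := analyticAt_eval hA _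
  exact (analyticAt_eval hg.fderiv _).add ((hAu.mul hg).sub (hg.mul hAu))

lemma analyticAt_curv {A : E → E →L[ℝ] 𝔸} {y : E} (hA : AnalyticAt ℝ A y) (u e : E) :
    AnalyticAt ℝ (curv A u e) y := by
  have h : ∀ w, AnalyticAt ℝ (fun x => A x w) y := fun w => analyticAt_eval hA _
  exact ((analyticAt_eval (h e).fderiv _).sub
    (analyticAt_eval (h u).fderiv _)).add (((h u).mul (h e)).sub ((h e).mul (h u)))

/-- Conjugation by the parallel transport turns covariant differentiation in the radial
direction into ordinary differentiation along the ray. -/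
lemma iteratedDeriv_conj {A : E → E →L[ℝ] 𝔸} {y u : E} (hA : AnalyticAt ℝ A y)
    {ω ψ : ℝ → 𝔸}
    (hω : ∀ᶠ s in 𝓝 (0:ℝ), HasDerivAt ω (ω s * A (y + s • u) u) s)
    (hψ : ∀ᶠ s in 𝓝 (0:ℝ), HasDerivAt ψ (-(A (y + s • u) u * ψ s)) s)
    {g : E → 𝔸} (hg : AnalyticAt ℝ g y) (n : ℕ) :
    iteratedDeriv n (fun s : ℝ => ω s * g (y + s • u) * ψ s) 0
      = ω 0 * (covD A u)^[n] g y * ψ 0 := by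
  induction n generalizing g with
  | zero => simp
  | succ n ih =>
    have ht : Tendsto (fun s : ℝ => y + s • u) (𝓝 0) (𝓝 y) := by
      have : Continuous (fun s : ℝ => y + s • u) := by fun_prop
      simpa using this.tendsto 0
    have h1 : deriv (fun s : ℝ => ω s * g (y + s • u) * ψ s) =ᶠ[𝓝 0]
        fun s => ω s * covD A u g (y + s • u) * ψ s := by
      filter_upwards [hω, hψ, ht.eventually hg.eventually_analyticAt] with s h1 h2 h3
      have hl : HasDerivAt (fun s : ℝ => y + s • u) u s := by
        simpa using ((hasDerivAt_id s).smul_const u).const_add y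
      have h4 : HasDerivAt (fun s : ℝ => g (y + s • u)) (fderiv ℝ g (y + s • u) u) s :=
        h3.differentiableAt.hasFDerivAt.comp_hasDerivAt s hl
      have h5 : HasDerivAt (fun s : ℝ => ω s * g (y + s • u) * ψ s) _ s := (h1.mul h4).mul h2
      rw [h5.deriv]
      simp only [covD, Pi.mul_apply]
      noncomm_ring
    rw [iteratedDeriv_succ', h1.iteratedDeriv_eq, ih (analyticAt_covD hA u hg),
      Function.iterate_succ_apply]

/-- The `j`-th term of the Fock–Schwinger series for a Banach-algebra-valued connection
one-form, with the contracted indices absorbed into the vector `u`. -/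
noncomputable def fsTerm (A : E → E →L[ℝ] 𝔸) (y e u : E) (j : ℕ) : 𝔸 :=
  (((j : ℝ) + 1) / (Nat.factorial (j + 2) : ℝ)) • (covD A u)^[j] (curv A u e) y

/-- If `Ψ` is analytic at `0` and satisfies the Euler equation of radial parallel transport for
`A`, then `Ψ⁻¹ (∂_e Ψ + A(e) Ψ)` is given near `0` by the absolutely convergent
Fock–Schwinger series. -/
theorem fockSchwinger_abstract {A : E → E →L[ℝ] 𝔸} {y : E} (hA : AnalyticAt ℝ A y)
    {Ψ : E → 𝔸} (hΨ : AnalyticAt ℝ Ψ 0) (hΨ0 : Ψ 0 = 1)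
    (hE : ∀ᶠ v in 𝓝 (0:E), fderiv ℝ Ψ v v = -(A (y + v) v * Ψ v)) (e : E) :
    ∀ᶠ v in 𝓝 (0:E), (Summable fun j => ‖fsTerm A y e v j‖) ∧
      fderiv ℝ Ψ v e + A (y + v) e * Ψ v = Ψ v * ∑' j, fsTerm A y e v j := by
  set Ω : E → 𝔸 := fun v => Ring.inverse (Ψ v) with hΩdef
  have hΩ : AnalyticAt ℝ Ω 0 := by
    have h := analyticAt_inverse (𝕜 := ℝ) (1 : 𝔸ˣ)
    rw [Units.val_one, ← hΨ0] at h
    exact h.comp hΨ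
  have hunit : ∀ᶠ v in 𝓝 (0:E), IsUnit (Ψ v) := by
    apply hΨ.continuousAt.eventually
    rw [hΨ0]
    exact Units.nhds 1
  have hshift : AnalyticAt ℝ (fun v : E => y + v) 0 := analyticAt_const.add analyticAt_id
  have hAs : AnalyticAt ℝ (fun v => A (y + v)) 0 :=
    AnalyticAt.fun_comp (g := A) (by simpa using hA) hshift
  set χ : E → 𝔸 := fun v => fderiv ℝ Ψ v e + A (y + v) e * Ψ v with hχdef
  set r : E → 𝔸 := fun v => Ω v * χ v with hrdef
  have hr : AnalyticAt ℝ r 0 :=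
    hΩ.mul ((analyticAt_eval hΨ.fderiv _).add
      ((analyticAt_eval hAs _).mul hΨ))
  obtain ⟨q, hq⟩ := hr
  have hray : ∀ u : E, Tendsto (fun s : ℝ => s • u) (𝓝 0) (𝓝 0) := fun u => by
    have : Continuous (fun s : ℝ => s • u) := by fun_prop
    simpa using this.tendsto 0
  have hline : ∀ (u : E) (s : ℝ), HasDerivAt (fun s : ℝ => s • u) u s := fun u s => by
    simpa using (hasDerivAt_id s).smul_const u
  have hrayA : ∀ {F : Type _} [NormedAddCommGroup F] [NormedSpace ℝ F] {f : E → F} (u : E),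
      AnalyticAt ℝ f 0 → AnalyticAt ℝ (fun s : ℝ => f (s • u)) 0 := fun u hf =>
    AnalyticAt.fun_comp (by simpa using hf) (analyticAt_id.smul analyticAt_const)
  have hψ : ∀ u : E, ∀ᶠ s in 𝓝 (0:ℝ),
      HasDerivAt (fun s : ℝ => Ψ (s • u)) (-(A (y + s • u) u * Ψ (s • u))) s := by
    intro u
    -- Euler's equation at `s • u` can be divided by `s ≠ 0`; continuity extends it to `s = 0`.
    have h1 : (fun s : ℝ => fderiv ℝ Ψ (s • u) u) =ᶠ[𝓝 0]
        fun s => -(A (y + s • u) u * Ψ (s • u)) := by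
      have c1 : AnalyticAt ℝ (fun s : ℝ => fderiv ℝ Ψ (s • u) u) 0 :=
        hrayA u (analyticAt_eval hΨ.fderiv u)
      have c2 : AnalyticAt ℝ (fun s : ℝ => -(A (y + s • u) u * Ψ (s • u))) 0 :=
        hrayA u (((analyticAt_eval hAs u).mul hΨ).neg)
      rw [← c1.continuousAt.eventuallyEq_nhds_iff_eventuallyEq_nhdsNE c2.continuousAt]
      filter_upwards [nhdsWithin_le_nhds ((hray u).eventually hE), self_mem_nhdsWithin]
        with s hs hs0
      have hs0' : s ≠ 0 := hs0
      rw [map_smul, map_smul, smul_mul_assoc, ← smul_neg] at hs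
      exact smul_right_injective _ hs0' hs
    filter_upwards [h1, (hray u).eventually hΨ.eventually_analyticAt] with s hs ha
    rw [← hs]
    exact ha.differentiableAt.hasFDerivAt.comp_hasDerivAt s (hline u s)
  have hω : ∀ u : E, ∀ᶠ s in 𝓝 (0:ℝ),
      HasDerivAt (fun s : ℝ => Ω (s • u)) (Ω (s • u) * A (y + s • u) u) s := by
    intro u
    filter_upwards [hψ u, (hray u).eventually hΩ.eventually_analyticAt,
      ((hray u).eventually hunit).eventually_nhds] with s h1 h2 h3
    have h4 : HasDerivAt (fun s : ℝ => Ω (s • u)) (fderiv ℝ Ω (s • u) u) s := by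
      have := h2.differentiableAt.hasFDerivAt.comp_hasDerivAt (f := fun s : ℝ => s • u) s (hline u s)
      exact this
    have h5 : HasDerivAt (fun s : ℝ => Ω (s • u) * Ψ (s • u)) _ s := h4.mul h1
    have h6 : (fun s : ℝ => Ω (s • u) * Ψ (s • u)) =ᶠ[𝓝 s] fun _ => 1 := by
      filter_upwards [h3] with t ht using Ring.inverse_mul_cancel _ ht
    have h7 := h5.unique ((hasDerivAt_const s (1:𝔸)).congr_of_eventuallyEq h6)
    have h8 : fderiv ℝ Ω (s • u) u * Ψ (s • u)
        = (Ω (s • u) * A (y + s • u) u) * Ψ (s • u) := by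
      rw [mul_neg, ← sub_eq_add_neg, sub_eq_zero] at h7
      rw [h7, mul_assoc]
    rw [← h3.self_of_nhds.mul_right_cancel h8]
    exact h4
  -- The radial first-order equation `d/ds (s • r (s • u)) = s • Ω F(u, e) Ψ`.
  have hrad : ∀ u : E, deriv (fun s : ℝ => s • r (s • u)) =ᶠ[𝓝 0]
      fun s => s • (Ω (s • u) * curv A u e (y + s • u) * Ψ (s • u)) := by
    intro u
    have hE2 : ∀ᶠ v in 𝓝 (0:E), (fun v => fderiv ℝ Ψ v v + A (y + v) v * Ψ v) =ᶠ[𝓝 v]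
        fun _ => 0 := by
      apply Eventually.eventually_nhds
      filter_upwards [hE] with v hv
      rw [hv]; simp
    filter_upwards [hψ u, hω u, (hray u).eventually hE2,
      (hray u).eventually hΨ.eventually_analyticAt,
      (hray u).eventually (hshift.continuousAt.tendsto.eventually
        (by simpa using hA.eventually_analyticAt))] with s h1 h2 h3 h4 h5
    have hAd := h5.differentiableAt.hasFDerivAt
    have hΨd := h4.differentiableAt.hasFDerivAt
    have hΨ2 := h4.fderiv.differentiableAt.hasFDerivAt
    have hsymm : IsSymmSndFDerivAt ℝ Ψ (s • u) :=
      (h4.contDiffAt (n := ⊤)).isSymmSndFDerivAt (by simp)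
    have hcurv : curv A u e (y + s • u) = fderiv ℝ A (y + s • u) u e
        - fderiv ℝ A (y + s • u) e u
        + (A (y + s • u) u * A (y + s • u) e - A (y + s • u) e * A (y + s • u) u) := by
      have h : ∀ w, fderiv ℝ (fun z => A z w) (y + s • u) =
          (ContinuousLinearMap.apply ℝ 𝔸 w).comp (fderiv ℝ A (y + s • u)) := fun w =>
        ((ContinuousLinearMap.apply ℝ 𝔸 w).hasFDerivAt.comp _ hAd).fderiv
      simp [curv, h]
    have hAsd : HasFDerivAt (fun v => A (y + v)) (fderiv ℝ A (y + s • u)) (s • u) := by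
      have := hAd.comp (f := fun v => y + v) (s • u) ((hasFDerivAt_id (s • u)).const_add y)
      rw [ContinuousLinearMap.comp_id] at this
      exact this
    -- Differentiate Euler's equation in the direction `e`.
    have hZ := ((hΨ2.clm_apply (hasFDerivAt_id (s • u))).add
      ((hAsd.clm_apply (hasFDerivAt_id (s • u))).mul' hΨd)).unique
      ((hasFDerivAt_const (0:𝔸) (s • u)).congr_of_eventuallyEq h3)
    have hZe := congrArg (fun T : E →L[ℝ] 𝔸 => Ω (s • u) * T e) hZ
    have hχ1 : HasDerivAt (fun s : ℝ => fderiv ℝ Ψ (s • u) e)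
        (fderiv ℝ (fderiv ℝ Ψ) (s • u) u e) s := by
      have := hΨ2.comp_hasDerivAt s (hline u s)
      exact (ContinuousLinearMap.apply ℝ 𝔸 e).hasFDerivAt.comp_hasDerivAt s this
    have hβ : HasDerivAt (fun s : ℝ => A (y + s • u) e) (fderiv ℝ A (y + s • u) u e) s := by
      have := hAsd.comp_hasDerivAt s (hline u s)
      exact (ContinuousLinearMap.apply ℝ 𝔸 e).hasFDerivAt.comp_hasDerivAt s this
    have hD : HasDerivAt (fun s : ℝ => s • r (s • u)) _ s :=
      (hasDerivAt_id s).smul (h2.mul (hχ1.add (hβ.mul h1)))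
    rw [hD.deriv, hcurv]
    have hsw := hsymm e u
    simp only [ContinuousLinearMap.comp_id, id_eq, map_smul, add_apply,
      ContinuousLinearMap.flip_apply, smul_apply, smul_eq_mul, smul_mul_assoc,
      MulOpposite.smul_eq_mul_unop, MulOpposite.unop_op, zero_apply,
      mul_zero, hsw, mul_add, mul_smul_comm, add_mul] at hZe
    simp only [id_eq, one_smul, r, χ, mul_add, add_mul, sub_mul, mul_sub, mul_neg, smul_add,
      smul_sub, smul_neg, mul_assoc]
    rw [← sub_eq_zero, ← hZe]
    abel
  have hcoef : ∀ (u : E) (n : ℕ), ((n:ℝ) + 1) • (n.factorial • q n fun _ => u)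
      = iteratedDeriv n
        (fun s : ℝ => s • (Ω (s • u) * curv A u e (y + s • u) * Ψ (s • u))) 0 := by
    intro u n
    rw [factorial_smul_coeff hq, ← iteratedDeriv_id_smul (hrayA u hq.analyticAt),
      iteratedDeriv_succ', (hrad u).iteratedDeriv_eq]
  have hΩ0 : Ω 0 = 1 := by simp [hΩdef, hΨ0]
  -- The homogeneous part of degree `j + 1` of `r` is the `j`-th Fock–Schwinger term.
  have key : ∀ u : E, ∀ j, (q (j+1) fun _ => u) = fsTerm A y e u j := by
    intro u j
    have hG : AnalyticAt ℝ
        (fun s : ℝ => Ω (s • u) * curv A u e (y + s • u) * Ψ (s • u)) 0 := by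
      have hc : AnalyticAt ℝ (fun v => curv A u e (y + v)) 0 :=
        AnalyticAt.fun_comp (by simpa using analyticAt_curv hA u e) hshift
      exact hrayA u ((hΩ.mul hc).mul hΨ)
    have h := hcoef u (j + 1)
    rw [iteratedDeriv_id_smul hG,
      iteratedDeriv_conj hA (hω u) (hψ u) (analyticAt_curv hA u e)] at h
    simp only [zero_smul, hΩ0, hΨ0, one_mul, mul_one] at h
    have hj : ((j:ℝ) + 2) * ((j + 1).factorial : ℝ) = ((j + 2).factorial : ℝ) := by
      rw [Nat.factorial_succ (j + 1)]; push_cast; ring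
    have hne : ((j + 2).factorial : ℝ) ≠ 0 := by positivity
    rw [fsTerm, div_eq_inv_mul, mul_smul, ← h, ← Nat.cast_smul_eq_nsmul ℝ, smul_smul, smul_smul,
      mul_assoc, show (((j + 1 : ℕ) : ℝ) + 1) * ((j + 1).factorial : ℝ) = ((j + 2).factorial : ℝ) by
        rw [← hj]; push_cast; ring, inv_mul_cancel₀ hne]
    exact (one_smul ℝ _).symm
  have key0 : ∀ u : E, (q 0 fun _ => u) = 0 := fun u => by
    simpa using hcoef u 0
  obtain ⟨ρ, hρ⟩ := hq
  have hball : ∀ᶠ v in 𝓝 (0:E), v ∈ Metric.eball (0:E) ρ := Metric.eball_mem_nhds _ hρ.r_pos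
  filter_upwards [hball, hunit] with v hv hu
  have hs := q.summable_norm_apply (x := v) (Metric.eball_subset_eball hρ.r_le hv)
  have hs1 := (summable_nat_add_iff 1).2 hs
  simp only [key] at hs1
  refine ⟨hs1, ?_⟩
  have h := hρ.hasSum hv
  have h2 := h.tsum_eq
  rw [h.summable.tsum_eq_zero_add, key0 v] at h2
  simp only [key, zero_add] at h2
  rw [h2, hrdef]
  simp only [hΩdef]
  rw [← mul_assoc, Ring.mul_inverse_cancel _ hu, one_mul]

end Abstract

/-! ### Analytic dependence of parallel transport on the direction -/

section ODE
open Filter Topology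

variable {E 𝔸 : Type*} [NormedAddCommGroup E] [NormedSpace ℝ E]
  [NormedRing 𝔸] [NormedAlgebra ℝ 𝔸] [CompleteSpace 𝔸]

omit [CompleteSpace 𝔸] in
lemma continuous_volterra (f : C(unitInterval, 𝔸)) :
    Continuous fun s : unitInterval =>
      ∫ t in (0:ℝ)..s, f (Set.projIcc 0 1 zero_le_one t) := by
  have hc : Continuous fun t : ℝ => f (Set.projIcc 0 1 zero_le_one t) := by fun_prop
  exact (intervalIntegral.continuous_primitive (fun a b => hc.intervalIntegrable a b) 0).comp
    continuous_subtype_val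

/-- The Volterra operator `f ↦ (s ↦ ∫₀ˢ f)` on continuous functions on `[0, 1]`. -/
noncomputable def volterra (𝔸 : Type*) [NormedRing 𝔸] [NormedAlgebra ℝ 𝔸] :
    C(unitInterval, 𝔸) →L[ℝ] C(unitInterval, 𝔸) :=
  LinearMap.mkContinuous
    { toFun := fun f => ⟨_, continuous_volterra f⟩
      map_add' := fun f g => by
        ext s
        have hc : ∀ f : C(unitInterval, 𝔸),
          Continuous fun t : ℝ => f (Set.projIcc 0 1 zero_le_one t) := fun f => by fun_prop
        exact intervalIntegral.integral_add ((hc f).intervalIntegrable _ _)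
          ((hc g).intervalIntegrable _ _)
      map_smul' := fun c f => by
        ext s
        exact intervalIntegral.integral_smul c
          fun t : ℝ => f (Set.projIcc 0 1 zero_le_one t) } 1 (fun f => by
    rw [one_mul, ContinuousMap.norm_le _ (norm_nonneg f)]
    intro s
    refine (intervalIntegral.norm_integral_le_of_norm_le_const (C := ‖f‖)
      fun t _ => f.norm_coe_le_norm _).trans ?_
    rw [sub_zero, abs_of_nonneg s.2.1]
    exact mul_le_of_le_one_right (norm_nonneg f) s.2.2)

omit [CompleteSpace 𝔸] in
lemma volterra_apply (f : C(unitInterval, 𝔸)) (s : unitInterval) :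
    volterra 𝔸 f s = ∫ t in (0:ℝ)..s, f (Set.projIcc 0 1 zero_le_one t) := rfl

/-- The map `c ↦ (t ↦ tⁿ c)` into continuous functions on `[0, 1]`. -/
noncomputable def monomialCLM (𝔸 : Type*) [NormedRing 𝔸] [NormedAlgebra ℝ 𝔸] (n : ℕ) :
    𝔸 →L[ℝ] C(unitInterval, 𝔸) :=
  LinearMap.mkContinuous
    { toFun := fun c => ⟨fun t => (t:ℝ) ^ n • c, by fun_prop⟩
      map_add' := fun c d => by ext t; simp
      map_smul' := fun a c => by ext t; simp [smul_comm a] } 1 (fun c => by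
    rw [one_mul, ContinuousMap.norm_le _ (norm_nonneg c)]
    intro t
    have h0 : |(t:ℝ)| ≤ 1 := by rw [abs_of_nonneg t.2.1]; exact t.2.2
    simp only [LinearMap.coe_mk, AddHom.coe_mk, ContinuousMap.coe_mk, norm_smul, norm_pow,
      Real.norm_eq_abs]
    exact mul_le_of_le_one_left (norm_nonneg c) (pow_le_one₀ (abs_nonneg _) h0))

/-- Restricting an analytic function to rays gives an analytic family of paths: the `n`-th
Taylor coefficient just acquires the factor `tⁿ`, which is at most one. -/
lemma exists_analytic_rays {g : E → 𝔸} {y : E} (hg : AnalyticAt ℝ g y) :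
    ∃ b : E → C(unitInterval, 𝔸), AnalyticAt ℝ b 0 ∧
      ∀ᶠ v in 𝓝 (0:E), ∀ t : unitInterval, b v t = g (y + (t:ℝ) • v) := by
  obtain ⟨p, ρ, hp⟩ := hg
  let q : FormalMultilinearSeries ℝ E C(unitInterval, 𝔸) := fun n =>
    (monomialCLM 𝔸 n).compContinuousMultilinearMap (p n)
  have hle : ∀ n, ‖q n‖ ≤ ‖p n‖ := fun n => by
    refine (ContinuousLinearMap.norm_compContinuousMultilinearMap_le _ _).trans ?_
    refine mul_le_of_le_one_left (norm_nonneg _) ?_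
    exact LinearMap.mkContinuous_norm_le _ zero_le_one _
  have hrad : ρ ≤ q.radius := by
    exact hp.r_le.trans (FormalMultilinearSeries.radius_le_of_le fun n => hle n)
  have hq := q.hasFPowerSeriesOnBall (hp.r_pos.trans_le hrad)
  refine ⟨q.sum, hq.analyticAt, ?_⟩
  filter_upwards [Metric.eball_mem_nhds (0:E) hp.r_pos] with v hv t
  have h1 := (hq.hasSum (Metric.eball_subset_eball hrad hv)).mapL (ContinuousMap.evalCLM ℝ t)
  have htv : (t:ℝ) • v ∈ Metric.eball (0:E) ρ := by
    rw [Metric.mem_eball, edist_zero_right] at hv ⊢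
    refine lt_of_le_of_lt ?_ hv
    rw [enorm_smul]
    refine mul_le_of_le_one_left zero_le ?_
    rw [Real.enorm_eq_ofReal t.2.1]
    exact ENNReal.ofReal_le_one.2 t.2.2
  have h2 := hp.hasSum htv
  rw [zero_add] at h1
  have h3 : (fun n => ContinuousMap.evalCLM ℝ t (q n fun _ => v))
      = fun n => p n fun _ => (t:ℝ) • v := by
    funext n
    simp [q, monomialCLM,
      ContinuousMultilinearMap.map_smul_univ (p n) (fun _ => (t:ℝ)) (fun _ => v)]
  rw [h3] at h1
  exact h1.unique h2

omit [CompleteSpace 𝔸] in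
/-- Solutions of `Q + V (a v * Q) = x₀` depend analytically on `v` near a zero of `a`, since
`1 + V (a v * ·)` is then an invertible operator and inversion is analytic. -/
lemma exists_analytic_solution {X : Type*} [NormedRing X] [NormedAlgebra ℝ X]
    [CompleteSpace X] (V : X →L[ℝ] X) {a : E → X} (ha : AnalyticAt ℝ a 0) (ha0 : a 0 = 0)
    (x₀ : X) :
    ∃ S : E → X, AnalyticAt ℝ S 0 ∧
      ∀ᶠ v in 𝓝 (0:E), ∀ Q : X, Q + V (a v * Q) = x₀ → Q = S v := by
  let M : X →L[ℝ] (X →L[ℝ] X) :=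
    (ContinuousLinearMap.compL ℝ X X X V).comp (ContinuousLinearMap.mul ℝ X)
  let L : E → (X →L[ℝ] X) := fun v => M (a v)
  have hL : AnalyticAt ℝ L 0 := (M.analyticAt _).fun_comp ha
  have hL0 : L 0 = 0 := by simp [L, ha0]
  let K : E → (X →L[ℝ] X) := fun v => 1 + L v
  have hK : AnalyticAt ℝ K 0 := analyticAt_const.add hL
  have hK0 : K 0 = 1 := by simp [K, hL0]
  have hinv : AnalyticAt ℝ (fun v => Ring.inverse (K v)) 0 := by
    have h := analyticAt_inverse (𝕜 := ℝ) (1 : (X →L[ℝ] X)ˣ)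
    rw [Units.val_one, ← hK0] at h
    exact h.fun_comp hK
  have hunit : ∀ᶠ v in 𝓝 (0:E), IsUnit (K v) := by
    apply hK.continuousAt.eventually
    rw [hK0]
    exact Units.nhds 1
  refine ⟨fun v => Ring.inverse (K v) x₀,
    ((ContinuousLinearMap.apply ℝ X x₀).analyticAt _).fun_comp hinv, ?_⟩
  filter_upwards [hunit] with v hv Q hQ
  rw [← hQ]
  change Q = (Ring.inverse (K v) * K v) Q
  rw [Ring.inverse_mul_cancel _ hv]
  rfl

/-- The initial value problem `p' = -a(v) p`, `p 0 = 1` is the integral equation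
`p + V (a(v) p) = 1` with `V` the Volterra operator, so its endpoint value is analytic in `v`
near a zero of `a`. -/
lemma exists_analytic_endpoint {a : E → C(unitInterval, 𝔸)} (ha : AnalyticAt ℝ a 0)
    (ha0 : a 0 = 0) :
    ∃ Ψ : E → 𝔸, AnalyticAt ℝ Ψ 0 ∧ ∀ᶠ v in 𝓝 (0:E), ∀ p : ℝ → 𝔸, p 0 = 1 →
      (∀ s ∈ Set.Icc (0:ℝ) 1, HasDerivWithinAt p
        (-(a v (Set.projIcc 0 1 zero_le_one s) * p s)) (Set.Icc (0:ℝ) 1) s) → p 1 = Ψ v := by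
  obtain ⟨S, hS, hSeq⟩ := exists_analytic_solution (volterra 𝔸) ha ha0 1
  refine ⟨fun v => S v 1,
    ((ContinuousMap.evalCLM ℝ (1 : unitInterval)).analyticAt _).fun_comp hS, ?_⟩
  filter_upwards [hSeq] with v hv p hp0 hp
  have hpc : ContinuousOn p (Set.Icc 0 1) := fun s hs => (hp s hs).continuousWithinAt
  let Q : C(unitInterval, 𝔸) := ⟨fun s => p s, hpc.domRestrict⟩
  have hKQ : Q + volterra 𝔸 (a v * Q) = 1 := by
    ext s
    have hc : Continuous fun t : ℝ => (a v * Q) (Set.projIcc 0 1 zero_le_one t) := by fun_prop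
    have h := intervalIntegral.integral_eq_sub_of_hasDerivAt_of_le (f := p)
      (f' := fun t => -((a v * Q) (Set.projIcc 0 1 zero_le_one t))) s.2.1
      (hpc.mono (Set.Icc_subset_Icc_right s.2.2))
      (fun t ht => by
        have ht' : t ∈ Set.Ioo (0:ℝ) 1 := ⟨ht.1, ht.2.trans_le s.2.2⟩
        have := (hp t (Set.Ioo_subset_Icc_self ht')).hasDerivAt (Icc_mem_nhds ht'.1 ht'.2)
        have hpt : p t = Q (Set.projIcc 0 1 zero_le_one t) := by
          rw [Set.projIcc_of_mem zero_le_one (Set.Ioo_subset_Icc_self ht')]; rfl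
        rw [hpt] at this
        exact this)
      (hc.neg.intervalIntegrable _ _)
    rw [intervalIntegral.integral_neg, hp0] at h
    have hK' : (Q + volterra 𝔸 (a v * Q)) s = p s + volterra 𝔸 (a v * Q) s := rfl
    rw [hK', volterra_apply, ← neg_neg (∫ t in (0:ℝ)..s, _), h]
    simp
  rw [← hv Q hKQ]
  rfl

end ODE

/-! ### Contraction of indices -/

section Indices
open Filter Topology

variable {𝔸 : Type*} [NormedRing 𝔸] [NormedAlgebra ℝ 𝔸] {d : ℕ}

/-- The one-form `u ↦ ∑ μ, u μ • b μ x` with components `b μ`. -/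
noncomputable def oneForm (b : Fin d → EuclideanSpace ℝ (Fin d) → 𝔸) :
    EuclideanSpace ℝ (Fin d) → EuclideanSpace ℝ (Fin d) →L[ℝ] 𝔸 :=
  fun x => ∑ μ, (EuclideanSpace.proj μ : EuclideanSpace ℝ (Fin d) →L[ℝ] ℝ).smulRight (b μ x)

lemma oneForm_apply (b : Fin d → EuclideanSpace ℝ (Fin d) → 𝔸)
    (x u : EuclideanSpace ℝ (Fin d)) : oneForm b x u = ∑ μ, u μ • b μ x := by
  simp [oneForm]

lemma oneForm_single (b : Fin d → EuclideanSpace ℝ (Fin d) → 𝔸)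
    (x : EuclideanSpace ℝ (Fin d)) (μ : Fin d) :
    oneForm b x (EuclideanSpace.single μ 1) = b μ x := by
  simp [oneForm_apply]

lemma analyticAt_oneForm {b : Fin d → EuclideanSpace ℝ (Fin d) → 𝔸}
    {x : EuclideanSpace ℝ (Fin d)} (hb : ∀ μ, AnalyticAt ℝ (b μ) x) :
    AnalyticAt ℝ (oneForm b) x := by
  refine Finset.analyticAt_fun_sum _ fun μ _ => ?_
  exact ((ContinuousLinearMap.smulRightL ℝ (EuclideanSpace ℝ (Fin d)) 𝔸
    (EuclideanSpace.proj μ)).analyticAt _).fun_comp (hb μ)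

lemma sum_single_eq (u : EuclideanSpace ℝ (Fin d)) :
    u = ∑ μ, u μ • EuclideanSpace.single μ (1:ℝ) := by
  ext i
  simp [Pi.single_apply]

variable {A : EuclideanSpace ℝ (Fin d) → EuclideanSpace ℝ (Fin d) →L[ℝ] 𝔸}

lemma covD_eq_sum (u : EuclideanSpace ℝ (Fin d)) (g : EuclideanSpace ℝ (Fin d) → 𝔸)
    (x : EuclideanSpace ℝ (Fin d)) :
    covD A u g x = ∑ μ, u μ • covD A (EuclideanSpace.single μ 1) g x := by
  unfold covD
  conv_lhs => rw [sum_single_eq u]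
  simp only [map_sum, map_smul, Finset.sum_mul, Finset.mul_sum, ← Finset.sum_sub_distrib,
    ← Finset.sum_add_distrib, smul_add, smul_sub, smul_mul_assoc, mul_smul_comm]

lemma covD_sum (u : EuclideanSpace ℝ (Fin d)) {ι : Type*} [Fintype ι] (c : ι → ℝ)
    {g : ι → EuclideanSpace ℝ (Fin d) → 𝔸} (hg : ∀ i, Differentiable ℝ (g i)) :
    covD A u (fun x => ∑ i, c i • g i x) = fun x => ∑ i, c i • covD A u (g i) x := by
  funext x
  unfold covD
  have h : fderiv ℝ (fun x => ∑ i, c i • g i x) x = ∑ i, c i • fderiv ℝ (g i) x :=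
    (HasFDerivAt.fun_sum fun i _ => (hg i x).hasFDerivAt.fun_const_smul (c i)).fderiv
  simp only [h, sum_apply, smul_apply, Finset.sum_mul,
    Finset.mul_sum, ← Finset.sum_sub_distrib, ← Finset.sum_add_distrib, smul_add, smul_sub,
    smul_mul_assoc, mul_smul_comm]

variable [CompleteSpace 𝔸]

lemma iterate_covD_sum (hA : ∀ x, AnalyticAt ℝ A x) (u : EuclideanSpace ℝ (Fin d))
    {ι : Type*} [Fintype ι] (c : ι → ℝ) {g : ι → EuclideanSpace ℝ (Fin d) → 𝔸}
    (hg : ∀ i x, AnalyticAt ℝ (g i) x) (j : ℕ) :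
    (covD A u)^[j] (fun x => ∑ i, c i • g i x)
      = fun x => ∑ i, c i • (covD A u)^[j] (g i) x := by
  induction j generalizing g with
  | zero => rfl
  | succ j ih =>
    simp only [Function.iterate_succ_apply]
    rw [covD_sum u c fun i x => (hg i x).differentiableAt,
      ih fun i x => analyticAt_covD (hA x) u (hg i x)]

lemma analyticAt_foldr_covD (hA : ∀ x, AnalyticAt ℝ A x)
    {g : EuclideanSpace ℝ (Fin d) → 𝔸} (hg : ∀ x, AnalyticAt ℝ g x) (l : List (Fin d))
    (x : EuclideanSpace ℝ (Fin d)) :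
    AnalyticAt ℝ (l.foldr (fun μ h => covD A (EuclideanSpace.single μ 1) h) g) x := by
  induction l generalizing x with
  | nil => exact hg x
  | cons μ l ih => exact analyticAt_covD (hA x) _ (ih x)

/-- The contraction `u^{μ₁} ⋯ u^{μⱼ} ∇_{μ₁} ⋯ ∇_{μⱼ} g` is the `j`-fold covariant derivative
in the constant direction `u`. -/
lemma sum_foldr_covD (hA : ∀ x, AnalyticAt ℝ A x) (u : EuclideanSpace ℝ (Fin d))
    {g : EuclideanSpace ℝ (Fin d) → 𝔸} (hg : ∀ x, AnalyticAt ℝ g x) (j : ℕ) :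
    (fun x => ∑ ν : Fin j → Fin d, (∏ i, u (ν i)) •
        (List.ofFn ν).foldr (fun μ h => covD A (EuclideanSpace.single μ 1) h) g x)
      = (covD A u)^[j] g := by
  induction j with
  | zero => funext x; simp
  | succ j ih =>
    rw [Function.iterate_succ_apply', ← ih]
    funext x
    rw [covD_eq_sum, ← (Fin.consEquiv fun _ => Fin d).sum_comp, Fintype.sum_prod_type]
    refine Finset.sum_congr rfl fun μ _ => ?_
    rw [covD_sum _ _ fun ν x => (analyticAt_foldr_covD hA hg _ x).differentiableAt,
      Finset.smul_sum]
    refine Finset.sum_congr rfl fun ν _ => ?_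
    simp [Fin.consEquiv, Fin.prod_univ_succ, mul_smul]

omit [CompleteSpace 𝔸] in
lemma curv_eq_sum (hA : ∀ x, AnalyticAt ℝ A x) (u e : EuclideanSpace ℝ (Fin d)) :
    curv A u e = fun x => ∑ μ, u μ • curv A (EuclideanSpace.single μ 1) e x := by
  funext x
  have h : ∀ w, fderiv ℝ (fun z => A z w) x =
      (ContinuousLinearMap.apply ℝ 𝔸 w).comp (fderiv ℝ A x) := fun w =>
    ((ContinuousLinearMap.apply ℝ 𝔸 w).hasFDerivAt.comp _
      (hA x).differentiableAt.hasFDerivAt).fderiv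
  simp only [curv, h, ContinuousLinearMap.comp_apply, ContinuousLinearMap.apply_apply]
  conv_lhs => rw [sum_single_eq u]
  simp only [map_sum, map_smul, sum_apply, smul_apply, Finset.sum_mul, Finset.mul_sum,
    ← Finset.sum_sub_distrib, ← Finset.sum_add_distrib, smul_add, smul_sub, smul_mul_assoc,
    mul_smul_comm]

/-- The Fock–Schwinger expansion of the parallel transport `v ↦ p v 1` from `y` to `y + v`, where
`p v` solves the transport equation along the segment `s ↦ y + s • v`. -/
theorem fockSchwinger_transport {b : Fin d → EuclideanSpace ℝ (Fin d) → 𝔸}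
    (hb : ∀ μ x, AnalyticAt ℝ (b μ) x) (y : EuclideanSpace ℝ (Fin d))
    {p : EuclideanSpace ℝ (Fin d) → ℝ → 𝔸} (hp0 : ∀ v, p v 0 = 1)
    (hp : ∀ v, ∀ s ∈ Set.Icc (0:ℝ) 1, HasDerivWithinAt (p v)
      (-(oneForm b (y + s • v) v * p v s)) (Set.Icc (0:ℝ) 1) s)
    (e : EuclideanSpace ℝ (Fin d)) :
    ∀ᶠ v in 𝓝 (0 : EuclideanSpace ℝ (Fin d)),
      (Summable fun j => ‖fsTerm (oneForm b) y e v j‖) ∧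
      fderiv ℝ (fun w => p w 1) v e + oneForm b (y + v) e * p v 1
        = p v 1 * ∑' j, fsTerm (oneForm b) y e v j := by
  -- The generator `s ↦ oneForm b (y + s • v) v` as an analytic family of paths.
  choose β hβ hβeq using fun μ => exists_analytic_rays (hb μ y)
  let a : EuclideanSpace ℝ (Fin d) → C(unitInterval, 𝔸) := fun v => ∑ μ, v μ • β μ v
  have ha : AnalyticAt ℝ a 0 := by
    refine Finset.analyticAt_fun_sum _ fun μ _ => ?_
    exact ((EuclideanSpace.proj μ : EuclideanSpace ℝ (Fin d) →L[ℝ] ℝ).analyticAt 0).smul (hβ μ)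
  obtain ⟨Ψ, hΨ, hΨeq⟩ := exists_analytic_endpoint ha
    (Finset.sum_eq_zero fun μ _ => zero_smul ℝ (β μ 0))
  have hend : ∀ᶠ v in 𝓝 (0 : EuclideanSpace ℝ (Fin d)), ∀ q : ℝ → 𝔸, q 0 = 1 →
      (∀ s ∈ Set.Icc (0:ℝ) 1, HasDerivWithinAt q
        (-(oneForm b (y + s • v) v * q s)) (Set.Icc (0:ℝ) 1) s) → q 1 = Ψ v := by
    filter_upwards [hΨeq, eventually_all.2 hβeq] with v h1 h2 q hq0 hq
    refine h1 q hq0 fun s hs => ?_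
    convert hq s hs using 3
    simp [a, oneForm_apply, h2, Set.projIcc_of_mem zero_le_one hs]
  obtain ⟨ε, hε, hball⟩ := Metric.eventually_nhds_iff_ball.1 hend
  -- Reparametrizing the transport along `v` gives the transport along `s • v`.
  have hscale : ∀ v ∈ Metric.ball (0 : EuclideanSpace ℝ (Fin d)) ε, ∀ s ∈ Set.Icc (0:ℝ) 1,
      p v s = Ψ (s • v) := by
    intro v hv s hs
    have hsv : s • v ∈ Metric.ball (0 : EuclideanSpace ℝ (Fin d)) ε := by
      rw [mem_ball_zero_iff] at hv ⊢
      rw [norm_smul, Real.norm_of_nonneg hs.1]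
      exact (mul_le_of_le_one_left (norm_nonneg v) hs.2).trans_lt hv
    have := hball _ hsv (fun t => p v (t * s)) (by simp [hp0]) (fun t ht => by
      have hts : Set.MapsTo (fun t : ℝ => t * s) (Set.Icc 0 1) (Set.Icc 0 1) := fun t ht =>
        ⟨mul_nonneg ht.1 hs.1, mul_le_one₀ ht.2 hs.1 hs.2⟩
      have h1 : HasDerivWithinAt (fun t : ℝ => t * s) s (Set.Icc 0 1) t := by
        simpa using ((hasDerivAt_id t).mul_const s).hasDerivWithinAt
      have h2 := (hp v (t * s) (hts ht)).scomp t h1 hts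
      have h3 : -(oneForm b (y + t • s • v) (s • v) * p v (t * s))
          = s • -(oneForm b (y + (t * s) • v) v * p v (t * s)) := by
        rw [map_smul, smul_smul, smul_mul_assoc, smul_neg]
      rw [h3]
      exact h2)
    simpa using this
  have hΨ0 : Ψ 0 = 1 := by
    simpa [hp0] using (hscale 0 (Metric.mem_ball_self hε) 0 (by simp)).symm
  have hpΨ : ∀ v ∈ Metric.ball (0 : EuclideanSpace ℝ (Fin d)) ε, p v 1 = Ψ v := fun v hv => by
    simpa using hscale v hv 1 (by simp)
  have hmem : ∀ᶠ v in 𝓝 (0 : EuclideanSpace ℝ (Fin d)), v ∈ Metric.ball 0 ε :=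
    Metric.ball_mem_nhds _ hε
  have hE : ∀ᶠ v in 𝓝 (0 : EuclideanSpace ℝ (Fin d)),
      fderiv ℝ Ψ v v = -(oneForm b (y + v) v * Ψ v) := by
    filter_upwards [hmem, hΨ.eventually_analyticAt] with v hv hva
    have h1 := hp v 1 (by simp)
    rw [hpΨ v hv, one_smul] at h1
    have hl : HasDerivAt (fun s : ℝ => s • v) v 1 := by
      simpa using (hasDerivAt_id (1:ℝ)).smul_const v
    have h2 : HasDerivAt (fun s : ℝ => Ψ (s • v)) (fderiv ℝ Ψ v v) 1 := by
      have h3 : HasFDerivAt Ψ (fderiv ℝ Ψ v) ((1:ℝ) • v) := by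
        simpa using hva.differentiableAt.hasFDerivAt
      exact h3.comp_hasDerivAt (1:ℝ) hl
    have h4 := h2.hasDerivWithinAt.congr (hscale v hv) (hscale v hv 1 (by simp))
    exact (uniqueDiffOn_Icc zero_lt_one 1 (by simp)).eq_deriv _ h4 h1
  filter_upwards [fockSchwinger_abstract (analyticAt_oneForm fun μ => hb μ y) hΨ hΨ0 hE e,
    hmem] with v hv hvε
  have hev : (fun w => p w 1) =ᶠ[𝓝 v] Ψ := by
    filter_upwards [Metric.isOpen_ball.mem_nhds hvε] with w hw using hpΨ w hw
  rw [hev.fderiv_eq, hpΨ v hvε]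
  exact hv

end Indices

/-! ### Transfer from matrices to a Banach algebra -/

section Transfer
open Filter Topology

variable {𝔸 : Type*} [NormedRing 𝔸] [NormedAlgebra ℝ 𝔸] {d m : ℕ}
  (T : Matrix (Fin m) (Fin m) ℂ ≃L[ℝ] 𝔸) (hmul : ∀ a b, T (a * b) = T a * T b)
  {B : Fin d → EuclideanSpace ℝ (Fin d) → Matrix (Fin m) (Fin m) ℂ}

lemma fderiv_transfer (g : EuclideanSpace ℝ (Fin d) → Matrix (Fin m) (Fin m) ℂ)
    (x e : EuclideanSpace ℝ (Fin d)) :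
    fderiv ℝ (fun z => T (g z)) x e = T (fderiv ℝ g x e) := by
  have h : fderiv ℝ (fun z => T (g z)) x = _ := T.comp_fderiv (f := g) (x := x)
  rw [h]
  rfl

include hmul in
lemma nab_transfer (μ : Fin d) (g : EuclideanSpace ℝ (Fin d) → Matrix (Fin m) (Fin m) ℂ) :
    (fun x => T (nab B μ g x))
      = covD (oneForm fun μ x => T (B μ x)) (EuclideanSpace.single μ 1) fun x => T (g x) := by
  funext x
  simp only [nab, covD, pd, oneForm_single, fderiv_transfer, map_add, map_sub, hmul]

include hmul in
lemma nabL_transfer (l : List (Fin d))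
    (g : EuclideanSpace ℝ (Fin d) → Matrix (Fin m) (Fin m) ℂ) :
    (fun x => T (nabL B l g x))
      = l.foldr (fun μ h => covD (oneForm fun μ x => T (B μ x)) (EuclideanSpace.single μ 1) h)
        fun x => T (g x) := by
  induction l with
  | nil => rfl
  | cons μ l ih =>
    rw [List.foldr_cons, ← ih]
    exact nab_transfer T hmul μ _

include hmul in
lemma Fstr_transfer (μ ν : Fin d) :
    (fun x => T (Fstr B μ ν x))
      = curv (oneForm fun μ x => T (B μ x)) (EuclideanSpace.single μ 1)
        (EuclideanSpace.single ν 1) := by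
  funext x
  simp only [Fstr, curv, pd, oneForm_single, fderiv_transfer, map_add, map_sub, hmul]

variable [CompleteSpace 𝔸]

include hmul in
/-- Splitting off the last index, which sits in the field strength, and contracting the others
identifies the term in components with the one written with `u`. -/
lemma fFSterm_transfer (hB : ∀ μ x, AnalyticAt ℝ (B μ) x) (y u : EuclideanSpace ℝ (Fin d))
    (μ : Fin d) (j : ℕ) :
    T (fFSterm B y u μ j)
      = fsTerm (oneForm fun μ x => T (B μ x)) y (EuclideanSpace.single μ 1) u j := by
  set A := oneForm fun μ x => T (B μ x) with hAdef
  have hA : ∀ x, AnalyticAt ℝ A x := fun x => analyticAt_oneForm fun μ =>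
    (T.toContinuousLinearMap.analyticAt _).fun_comp (hB μ x)
  have hc : ∀ (κ : Fin d) x, AnalyticAt ℝ (curv A (EuclideanSpace.single κ 1)
      (EuclideanSpace.single μ 1)) x := fun κ x => analyticAt_curv (hA x) _ _
  have hL : ∀ l κ, T (nabL B l (Fstr B κ μ) y)
      = l.foldr (fun μ h => covD A (EuclideanSpace.single μ 1) h)
        (curv A (EuclideanSpace.single κ 1) (EuclideanSpace.single μ 1)) y := fun l κ => by
    rw [hAdef, ← Fstr_transfer T hmul]
    exact congrFun (nabL_transfer T hmul l (Fstr B κ μ)) y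
  unfold fFSterm fsTerm
  rw [map_smul, map_sum, curv_eq_sum hA, iterate_covD_sum hA u _ hc,
    ← (Fin.snocEquiv fun _ => Fin d).sum_comp, Fintype.sum_prod_type]
  congr 1
  refine Finset.sum_congr rfl fun κ _ => ?_
  rw [← sum_foldr_covD hA u (hc κ), Finset.smul_sum]
  refine Finset.sum_congr rfl fun ν _ => ?_
  rw [map_smul, hL, Fin.prod_univ_castSucc]
  simp only [Fin.snocEquiv, Equiv.coe_fn_mk, Fin.snoc_castSucc, Fin.snoc_last]
  rw [mul_comm, mul_smul]

include hmul in
/-- The assertion for a single `μ`, given an algebra isomorphism `T` of the matrices onto a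
Banach algebra. -/
theorem fockSchwinger_transfer (hone : T 1 = 1) (hB : ∀ μ x, AnalyticAt ℝ (B μ) x)
    {P : EuclideanSpace ℝ (Fin d) → EuclideanSpace ℝ (Fin d) → ℝ → Matrix (Fin m) (Fin m) ℂ}
    (hP0 : ∀ x y, P x y 0 = 1)
    (hP : ∀ x y, ∀ s ∈ Set.Icc (0:ℝ) 1, HasDerivWithinAt (P x y)
      (-(∑ μ, (x μ - y μ) • B μ (y + s • (x - y))) * P x y s) (Set.Icc (0:ℝ) 1) s)
    (y : EuclideanSpace ℝ (Fin d)) (μ : Fin d) :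
    ∀ᶠ x in 𝓝 y, (Summable fun j : ℕ => ‖fFSterm B y (x - y) μ j‖) ∧
      fderiv ℝ (fun x' => P x' y 1) x (EuclideanSpace.single μ 1) + B μ x * P x y 1
        = P x y 1 * ∑' j : ℕ, fFSterm B y (x - y) μ j := by
  have hb : ∀ μ x, AnalyticAt ℝ (fun x => T (B μ x)) x := fun μ x =>
    (T.toContinuousLinearMap.analyticAt _).fun_comp (hB μ x)
  have key := fockSchwinger_transport hb y (p := fun v s => T (P (y + v) y s))
    (fun v => by rw [hP0, hone]) (fun v s hs => by
      have h := T.toContinuousLinearMap.hasFDerivAt.comp_hasDerivWithinAt s (hP (y + v) y s hs)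
      have h2 : -(oneForm (fun μ x => T (B μ x)) (y + s • v) v * T (P (y + v) y s))
          = T (-(∑ μ, ((y + v) μ - y μ) • B μ (y + s • (y + v - y))) * P (y + v) y s) := by
        simp only [hmul, map_neg, map_sum, map_smul, oneForm_apply, add_sub_cancel_left,
          PiLp.add_apply, neg_mul]
      rw [h2]
      exact h) (EuclideanSpace.single μ 1)
  have ht : Tendsto (fun x => x - y) (𝓝 y) (𝓝 0) := by
    have : Continuous fun x : EuclideanSpace ℝ (Fin d) => x - y := by fun_prop
    simpa using this.tendsto y
  filter_upwards [ht.eventually key] with x hx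
  simp only [← fFSterm_transfer T hmul hB, add_sub_cancel, oneForm_single] at hx
  obtain ⟨hs, heq⟩ := hx
  refine ⟨?_, T.injective ?_⟩
  · have h1 : Summable fun j => fFSterm B y (x - y) μ j := T.summable.1 hs.of_norm
    exact summable_norm_iff.2 h1
  · have hd : fderiv ℝ (fun w => T (P (y + w) y 1)) (x - y)
        = fderiv ℝ (fun x' => T (P x' y 1)) x := by
      rw [fderiv_comp_add_left (f := fun x' => T (P x' y 1)) y, add_sub_cancel]
    rw [hd, fderiv_transfer T (fun x' => P x' y 1)] at heq
    rw [map_add, hmul, hmul, T.map_tsum]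
    exact heq

/-- Matrices as operators on the Hermitian space `ℂᵐ`, whose operator norm is submultiplicative. -/
noncomputable def matrixEquivCLM (m : ℕ) : Matrix (Fin m) (Fin m) ℂ ≃L[ℝ]
    (EuclideanSpace ℂ (Fin m) →L[ℂ] EuclideanSpace ℂ (Fin m)) :=
  ((Matrix.toEuclideanCLM (n := Fin m) (𝕜 := ℂ)).toAlgEquiv.toLinearEquiv.restrictScalars
    ℝ).toContinuousLinearEquiv

end Transfer

theorem fock_schwinger_gauge_of_wilson_line
    (d m : ℕ) (hd : 0 < d) (hm : 0 < m)
    (B : Fin d → EuclideanSpace ℝ (Fin d) → Matrix (Fin m) (Fin m) ℂ)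
    (hB : ∀ μ, ∀ x, AnalyticAt ℝ (B μ) x)
    (P : EuclideanSpace ℝ (Fin d) → EuclideanSpace ℝ (Fin d) → ℝ →
      Matrix (Fin m) (Fin m) ℂ)
    (hP0 : ∀ x y, P x y 0 = 1)
    (hP : ∀ x y, ∀ s ∈ Set.Icc (0:ℝ) 1, HasDerivWithinAt (P x y)
      (-(∑ μ, (x μ - y μ) • B μ (y + s • (x - y))) * P x y s) (Set.Icc (0:ℝ) 1) s)
    (Φ : EuclideanSpace ℝ (Fin d) → EuclideanSpace ℝ (Fin d) →
      Matrix (Fin m) (Fin m) ℂ)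
    (hΦ : ∀ x y, Φ x y = P x y 1)
    (y : EuclideanSpace ℝ (Fin d)) :
    ∃ ε > (0:ℝ), ∀ x : EuclideanSpace ℝ (Fin d), ‖x - y‖ < ε → ∀ μ : Fin d,
      (Summable fun j : ℕ => ‖fFSterm B y (x - y) μ j‖) ∧
      fderiv ℝ (fun x' => Φ x' y) x (EuclideanSpace.single μ 1) + B μ x * Φ x y
        = Φ x y * ∑' j : ℕ, fFSterm B y (x - y) μ j := by
  have h : ∀ᶠ x in nhds y, ∀ μ : Fin d,
      (Summable fun j : ℕ => ‖fFSterm B y (x - y) μ j‖) ∧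
      fderiv ℝ (fun x' => P x' y 1) x (EuclideanSpace.single μ 1) + B μ x * P x y 1
        = P x y 1 * ∑' j : ℕ, fFSterm B y (x - y) μ j :=
    Filter.eventually_all.2 fun μ => fockSchwinger_transfer (matrixEquivCLM m)
      (map_mul (Matrix.toEuclideanCLM (n := Fin m) (𝕜 := ℂ)))
      (map_one (Matrix.toEuclideanCLM (n := Fin m) (𝕜 := ℂ))) hB hP0 hP y μ
  obtain ⟨ε, hε, hball⟩ := Metric.eventually_nhds_iff_ball.1 h
  refine ⟨ε, hε, fun x hx μ => ?_⟩
  simp only [hΦ]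
  exact hball x (by rwa [mem_ball_iff_norm]) μ
end
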